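/- arXiv:2206.08351 — 3 statements merged into one kernel-verified Lean document; each statement's English description precedes it below -/
import Mathlib

section
/- (Bhargava–Shankar–Wang) For each degree n ≥ 7 there exists a constant c > 0 such that for all sufficiently large real X, the number N_n(X) of degree-n subfields K ⊂ ℂ with D_K ≤ X satisfies N_n(X) ≥ c · X^{1/2 + 1/n}. -/
open NumberField
open scoped Classical

/-- The absolute value of the discriminant of a finite extension of `ℚ` realized as a
subfield of `ℂ` (junk value `0` if the extension is infinite). -/
noncomputable def absDiscC (K : IntermediateField ℚ ℂ) : ℕ :=
  if h : FiniteDimensional ℚ K then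
    haveI := h
    haveI : NumberField K := ⟨⟩
    (NumberField.discr K).natAbs
  else 0


/-- The polynomials used: monic of degree `m+1`, Eisenstein at `2`, and of the shape
(linear) * (Eisenstein) at `3`. -/
structure GoodPoly (m : ℕ) (f : Polynomial ℤ) : Prop where
  monic : f.Monic
  deg : f.natDegree = m + 1
  cm : f.coeff m = 2
  dvd : ∀ k < m, (6 : ℤ) ∣ f.coeff k
  not4 : ¬ (4 : ℤ) ∣ f.coeff 0
  not9 : ¬ (9 : ℤ) ∣ f.coeff 0

theorem GoodPoly.irreducible {m : ℕ} {f : Polynomial ℤ} (hf : GoodPoly m f) :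
    Irreducible f := by
  have hP : (Ideal.span {(2:ℤ)}).IsPrime := by
    rw [Ideal.span_singleton_prime (by norm_num)]
    exact Int.prime_two
  refine Polynomial.irreducible_of_eisenstein_criterion hP ?_ ?_ ?_ ?_ hf.monic.isPrimitive
  · rw [hf.monic.leadingCoeff, Ideal.mem_span_singleton]; norm_num
  · intro k hk
    rw [Polynomial.degree_eq_natDegree hf.monic.ne_zero, hf.deg] at hk
    have hk' : k < m + 1 := by exact_mod_cast hk
    rw [Ideal.mem_span_singleton]
    rcases Nat.lt_succ_iff_lt_or_eq.mp hk' with h | h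
    · exact dvd_trans (by norm_num) (hf.dvd k h)
    · rw [h, hf.cm]
  · rw [Polynomial.degree_eq_natDegree hf.monic.ne_zero, hf.deg]
    exact_mod_cast Nat.succ_pos m
  · rw [Ideal.span_singleton_pow, Ideal.mem_span_singleton]
    exact hf.not4

/-- The factorization over the 3-adic integers. -/
theorem GoodPoly.padic {m : ℕ} (hm : 1 ≤ m) {f : Polynomial ℤ} (hf : GoodPoly m f) :
    ∃ (r : ℤ_[3]) (h : Polynomial ℤ_[3]),
      f.map (Int.castRingHom ℤ_[3]) = (Polynomial.X - Polynomial.C r) * h ∧ Irreducible h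
        ∧ h.Monic ∧ h.natDegree = m := by
  set F := f.map (Int.castRingHom ℤ_[3]) with hF
  -- reduction
  have hred : f.map (Int.castRingHom (ZMod 3)) = Polynomial.X ^ m * (Polynomial.X - 1) := by
    ext k
    rw [Polynomial.coeff_map, Polynomial.coeff_X_pow_mul']
    split_ifs with hk
    · rcases Nat.lt_or_ge (m+1) k with h | h
      · rw [Polynomial.coeff_eq_zero_of_natDegree_lt (by rw [hf.deg]; exact h)]
        have h2 : k - m ≠ 0 := by omega
        have h3 : 1 ≠ k - m := by omega
        simp [Polynomial.coeff_X, Polynomial.coeff_one, h2, h3]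
      · rcases (by omega : k = m ∨ k = m + 1) with h | h
        · rw [h, hf.cm]; simp [Polynomial.coeff_X, Polynomial.coeff_one]; rfl
        · have := hf.monic.coeff_natDegree
          rw [hf.deg] at this
          rw [h, this]; simp [Polynomial.coeff_X, Polynomial.coeff_one]
    · have := hf.dvd k (by omega)
      have : (3 : ℤ) ∣ f.coeff k := dvd_trans (by norm_num) this
      simpa using (ZMod.intCast_zmod_eq_zero_iff_dvd (f.coeff k) 3).2 (by exact_mod_cast this)
  have hcomp : (PadicInt.toZMod (p := 3)).comp (Int.castRingHom ℤ_[3]) = Int.castRingHom (ZMod 3) :=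
    RingHom.ext_int _ _
  have hFred : F.map (PadicInt.toZMod (p := 3)) = Polynomial.X ^ m * (Polynomial.X - 1) := by
    rw [hF, Polynomial.map_map, hcomp, hred]
  have hnorm1 : ∀ x : ℤ_[3], ‖x‖ < 1 ↔ PadicInt.toZMod x = 0 := by
    intro x
    rw [← RingHom.mem_ker, PadicInt.ker_toZMod, PadicInt.maximalIdeal_eq_span_p, Ideal.mem_span_singleton]
    exact PadicInt.norm_lt_one_iff_dvd x
  have e1 : PadicInt.toZMod (Polynomial.eval 1 F) = 0 := by
    have := Polynomial.eval_map_apply (PadicInt.toZMod (p := 3)) (p := F) 1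
    rw [← this, hFred]; simp
  have e2 : PadicInt.toZMod (Polynomial.eval 1 F.derivative) = 1 := by
    have := Polynomial.eval_map_apply (PadicInt.toZMod (p := 3)) (p := F.derivative) 1
    rw [← this, ← Polynomial.derivative_map, hFred]; simp
  have n2 : ‖Polynomial.eval 1 F.derivative‖ = 1 := by
    apply le_antisymm (PadicInt.norm_le_one _)
    by_contra hlt
    rw [not_le, hnorm1, e2] at hlt
    exact one_ne_zero hlt
  obtain ⟨r, hr0, hr1, -, -⟩ := hensels_lemma (p := 3) (F := F) (a := 1) (by
    simp only [Polynomial.coe_aeval_eq_eval]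
    rw [n2, one_pow, hnorm1]; exact e1)
  simp only [Polynomial.coe_aeval_eq_eval] at hr0 hr1
  rw [n2, hnorm1, map_sub, map_one, sub_eq_zero] at hr1
  obtain ⟨h, hh⟩ := Polynomial.dvd_iff_isRoot.2 hr0
  have hFm : F.Monic := hf.monic.map _
  have hFd : F.natDegree = m + 1 := by rw [hF, hf.monic.natDegree_map, hf.deg]
  have hhm : h.Monic := (Polynomial.monic_X_sub_C r).of_mul_monic_left (hh ▸ hFm)
  have hhd : h.natDegree = m := by
    have := (Polynomial.monic_X_sub_C r).natDegree_mul hhm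
    rw [← hh, hFd, Polynomial.natDegree_X_sub_C] at this
    omega
  have hhred : h.map (PadicInt.toZMod (p := 3)) = Polynomial.X ^ m := by
    have h1 := hFred
    rw [hh, Polynomial.map_mul] at h1
    simp only [Polynomial.map_sub, Polynomial.map_X, Polynomial.map_C, hr1, map_one] at h1
    rw [mul_comm] at h1
    refine mul_right_cancel₀ ?_ h1
    exact (Polynomial.monic_X_sub_C (1 : ZMod 3)).ne_zero
  refine ⟨r, h, hh, ?_, hhm, hhd⟩
  have hP : (Ideal.span {(3:ℤ_[3])}).IsPrime := by
    have := (inferInstance : (IsLocalRing.maximalIdeal ℤ_[3]).IsPrime)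
    rw [PadicInt.maximalIdeal_eq_span_p] at this
    exact_mod_cast this
  have hmem : ∀ x : ℤ_[3], x ∈ Ideal.span {(3:ℤ_[3])} ↔ PadicInt.toZMod x = 0 := by
    intro x
    rw [← hnorm1, Ideal.mem_span_singleton]
    exact_mod_cast (PadicInt.norm_lt_one_iff_dvd x).symm
  refine Polynomial.irreducible_of_eisenstein_criterion hP ?_ ?_ ?_ ?_ hhm.isPrimitive
  · rw [hhm.leadingCoeff, hmem]; simp
  · intro k hk
    rw [Polynomial.degree_eq_natDegree hhm.ne_zero, hhd] at hk
    have hk' : k < m := by exact_mod_cast hk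
    rw [hmem, ← Polynomial.coeff_map, hhred, Polynomial.coeff_X_pow, if_neg (by omega)]
  · rw [Polynomial.degree_eq_natDegree hhm.ne_zero, hhd]
    exact_mod_cast hm
  · intro h0
    rw [Ideal.span_singleton_pow, Ideal.mem_span_singleton] at h0
    have hc : F.coeff 0 = (-r) * h.coeff 0 := by
      rw [hh, Polynomial.mul_coeff_zero]; simp
    have hd : (3:ℤ_[3])^2 ∣ F.coeff 0 := hc ▸ Dvd.dvd.mul_left h0 _
    rw [hF, Polynomial.coeff_map] at hd
    have := (PadicInt.norm_int_le_pow_iff_dvd (p := 3) (k := f.coeff 0) (n := 2))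
    apply hf.not9
    have h9 := this.1 ((PadicInt.norm_le_pow_iff_mem_span_pow _ 2).2 (by
      rw [Ideal.mem_span_singleton]; exact_mod_cast hd))
    norm_num at h9
    exact h9

theorem GoodPoly.minpoly_eq {m : ℕ} {f : Polynomial ℤ} (hf : GoodPoly m f)
    {α : ℂ} (hα : Polynomial.aeval α f = 0) :
    minpoly ℚ α = f.map (Int.castRingHom ℚ) := by
  symm
  apply minpoly.eq_of_irreducible_of_monic
  · exact (hf.monic.irreducible_iff_irreducible_map_fraction_map (K := ℚ)).1 hf.irreducible
  · rw [← algebraMap_int_eq, Polynomial.aeval_map_algebraMap, hα]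
  · exact hf.monic.map _

theorem GoodPoly.isIntegral {m : ℕ} {f : Polynomial ℤ} (hf : GoodPoly m f)
    {α : ℂ} (hα : Polynomial.aeval α f = 0) : IsIntegral ℤ α :=
  ⟨f, hf.monic, hα⟩

theorem GoodPoly.finrank {m : ℕ} {f : Polynomial ℤ} (hf : GoodPoly m f)
    {α : ℂ} (hα : Polynomial.aeval α f = 0) :
    Module.finrank ℚ (IntermediateField.adjoin ℚ {α}) = m + 1 := by
  rw [IntermediateField.adjoin.finrank (hf.isIntegral hα).tower_top, hf.minpoly_eq hα,
    hf.monic.natDegree_map, hf.deg]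

theorem degree_dvd_aux {k : Type*} [Field k] {m : ℕ} {r : k} {h q : Polynomial k}
    (hh : Irreducible h) (hd : h.natDegree = m) (hq : q ∣ (Polynomial.X - Polynomial.C r) * h) :
    q.natDegree ≤ 1 ∨ q.natDegree = m ∨ q.natDegree = m + 1 := by
  have hX : (Polynomial.X - Polynomial.C r) ≠ 0 := Polynomial.X_sub_C_ne_zero r
  by_cases hc : h ∣ q
  · right
    obtain ⟨s, rfl⟩ := hc
    rw [mul_comm h s] at hq
    have hs : s ∣ (Polynomial.X - Polynomial.C r) := (mul_dvd_mul_iff_right hh.ne_zero).1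
      hq
    have hs0 : s ≠ 0 := by rintro rfl; exact hX (zero_dvd_iff.1 hs)
    have := Polynomial.natDegree_le_of_dvd hs hX
    rw [Polynomial.natDegree_X_sub_C] at this
    rw [Polynomial.natDegree_mul hh.ne_zero hs0, hd]
    omega
  · left
    have hcop : IsCoprime q h := ((hh.coprime_iff_not_dvd).2 hc).symm
    have := Polynomial.natDegree_le_of_dvd (hcop.dvd_of_dvd_mul_right hq) hX
    rwa [Polynomial.natDegree_X_sub_C] at this

theorem GoodPoly.no_subfield {m : ℕ} (hm : 2 ≤ m) {f : Polynomial ℤ} (hf : GoodPoly m f)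
    {α : ℂ} (hα : Polynomial.aeval α f = 0) {β : ℂ} (hβ : β ∈ IntermediateField.adjoin ℚ {α})
    (hβ' : β ∉ (⊥ : IntermediateField ℚ ℂ)) :
    IntermediateField.adjoin ℚ {β} = IntermediateField.adjoin ℚ {α} := by
  set K := IntermediateField.adjoin ℚ {α} with hK
  set F := IntermediateField.adjoin ℚ {β} with hF
  have hint : IsIntegral ℚ α := (hf.isIntegral hα).tower_top
  have hle : F ≤ K := by
    rw [hF, IntermediateField.adjoin_simple_le_iff]; exact hβ
  have hfin : FiniteDimensional ℚ K := IntermediateField.adjoin.finiteDimensional hint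
  obtain ⟨r, h, hh, hirr, hmon, hdeg⟩ := hf.padic (by omega : 1 ≤ m)
  have hroot : Polynomial.aeval (r : ℚ_[3]) (minpoly ℚ α) = 0 := by
    rw [hf.minpoly_eq hα]
    have h1 : Polynomial.eval r (f.map (Int.castRingHom ℤ_[3])) = 0 := by rw [hh]; simp
    have h3 : Polynomial.aeval r f = 0 := by
      rw [Polynomial.eval_map] at h1
      exact h1
    rw [← algebraMap_int_eq, Polynomial.aeval_map_algebraMap]
    have h2 := Polynomial.aeval_algebraMap_apply ℚ_[3] r f
    rw [h3, map_zero] at h2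
    exact h2
  let φ : K →ₐ[ℚ] ℚ_[3] := (IntermediateField.algHomAdjoinIntegralEquiv ℚ hint).symm
    ⟨(r : ℚ_[3]), by
      rw [Polynomial.mem_aroots]; exact ⟨minpoly.ne_zero hint, hroot⟩⟩
  let ψ : F →ₐ[ℚ] ℚ_[3] := φ.comp (IntermediateField.inclusion hle)
  have hintF : IsIntegral F α := hint.tower_top
  have hdvd : minpoly F α ∣ f.map (Int.castRingHom F) := by
    apply minpoly.dvd
    rw [← algebraMap_int_eq, Polynomial.aeval_map_algebraMap, hα]
  have hdvd2 : (minpoly F α).map ψ.toRingHom ∣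
      (Polynomial.X - Polynomial.C (r : ℚ_[3])) * h.map (algebraMap ℤ_[3] ℚ_[3]) := by
    have h1 := Polynomial.map_dvd ψ.toRingHom hdvd
    have h2 := congrArg (Polynomial.map (algebraMap ℤ_[3] ℚ_[3])) hh
    rw [Polynomial.map_map] at h1 h2
    rw [RingHom.ext_int (ψ.toRingHom.comp (Int.castRingHom F))
      ((algebraMap ℤ_[3] ℚ_[3]).comp (Int.castRingHom ℤ_[3])), h2] at h1
    simpa using h1
  have hdeg3 := degree_dvd_aux (m := m)
    ((hmon.irreducible_iff_irreducible_map_fraction_map (K := ℚ_[3])).1 hirr)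
    (by rw [hmon.natDegree_map, hdeg]) hdvd2
  rw [(minpoly.monic hintF).natDegree_map] at hdeg3
  have hext : IntermediateField.extendScalars hle = IntermediateField.adjoin F {α} :=
    IntermediateField.extendScalars_adjoin hle
  have hfr : Module.finrank ℚ F * (minpoly F α).natDegree = m + 1 := by
    rw [← IntermediateField.adjoin.finrank hintF, ← hext, ← hf.finrank hα]
    exact Module.finrank_mul_finrank ℚ F (IntermediateField.extendScalars hle)
  have hpos := minpoly.natDegree_pos hintF
  have hcases : (minpoly F α).natDegree = 1 ∨ (minpoly F α).natDegree = m + 1 := by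
    rcases hdeg3 with h | h | h
    · left; omega
    · exfalso
      rw [h] at hfr
      have h1 : m ∣ m + 1 := Dvd.intro_left _ hfr
      have := (Nat.dvd_add_right (dvd_refl m)).1 h1
      have := Nat.le_of_dvd one_pos this
      omega
    · right; exact h
  rcases hcases with h | h
  · rw [h, mul_one] at hfr
    exact IntermediateField.eq_of_le_of_finrank_eq hle (by rw [hfr, hf.finrank hα])
  · exfalso
    rw [h] at hfr
    have h1 : Module.finrank ℚ F = 1 := by
      have : Module.finrank ℚ F * (m+1) = 1 * (m + 1) := by rw [hfr, one_mul]
      exact Nat.eq_of_mul_eq_mul_right (by omega) this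
    rw [IntermediateField.finrank_eq_one_iff] at h1
    apply hβ'
    rw [← h1]
    exact IntermediateField.mem_adjoin_simple_self ℚ β

theorem root_bound_aux {f : Polynomial ℤ} (hf : f.Monic) {N : ℕ} (hN : f.natDegree = N)
    {A H : ℝ} (hA : 0 ≤ A) (hH : 0 < H)
    (hc : ∀ k < N, |(f.coeff k : ℝ)| ≤ A * H ^ (N - k)) {z : ℂ} (hz : Polynomial.aeval z f = 0) :
    ‖z‖ ≤ (A + 1) * H := by
  by_contra hlt
  rw [not_le] at hlt
  set t := ‖z‖ with ht
  have hAH : 0 ≤ A * H := by positivity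
  have htpos : 0 < t := by nlinarith
  have h1 : z ^ N = - ∑ k ∈ Finset.range N, (f.coeff k : ℂ) * z ^ k := by
    rw [Polynomial.aeval_eq_sum_range, hN, Finset.sum_range_succ, ← hN, hf.coeff_natDegree, hN] at hz
    simp only [zsmul_eq_mul, Int.cast_one, one_mul] at hz
    linear_combination hz
  have h2 : t ^ N ≤ ∑ k ∈ Finset.range N, A * H ^ (N - k) * t ^ k := by
    rw [ht, ← norm_pow, h1, norm_neg]
    refine (norm_sum_le _ _).trans (Finset.sum_le_sum fun k hk => ?_)
    rw [norm_mul, norm_pow]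
    gcongr
    have := hc k (Finset.mem_range.1 hk)
    simpa using this
  have h3 : ∑ k ∈ Finset.range N, A * H ^ (N - k) * t ^ k
      = A * H * ∑ k ∈ Finset.range N, t ^ k * H ^ (N - 1 - k) := by
    rw [Finset.mul_sum]
    refine Finset.sum_congr rfl fun k hk => ?_
    have hk := Finset.mem_range.1 hk
    rw [show N - k = (N - 1 - k) + 1 by omega, pow_succ]; ring
  have h4 := (Commute.all t H).geom_sum₂_mul N
  set S := ∑ k ∈ Finset.range N, t ^ k * H ^ (N - 1 - k)
  rw [h3] at h2
  have hHN : 0 < H ^ N := by positivity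
  have htN : 0 < t ^ N := by positivity
  have h5 : A * H < t - H := by linarith
  have hd : 0 < t - H := by linarith
  have h6 : t ^ N * (t - H) ≤ A * H * (t ^ N - H ^ N) := by
    calc t ^ N * (t - H) ≤ (A * H * S) * (t - H) := by gcongr
      _ = A * H * (t ^ N - H ^ N) := by rw [← h4]; ring
  nlinarith

theorem absDiscC_bound {α : ℂ} (hα : IsIntegral ℤ α) {n : ℕ}
    (hn : Module.finrank ℚ (IntermediateField.adjoin ℚ {α}) = n) {R : ℝ}
    (hR : ∀ φ : (IntermediateField.adjoin ℚ {α}) →ₐ[ℚ] ℂ,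
      ‖φ (IntermediateField.AdjoinSimple.gen ℚ α)‖ ≤ R) :
    (absDiscC (IntermediateField.adjoin ℚ {α}) : ℝ) ≤ (2 * R) ^ (n * (n - 1)) := by
  have hint : IsIntegral ℚ α := hα.tower_top
  have hfin : FiniteDimensional ℚ (IntermediateField.adjoin ℚ {α}) :=
    IntermediateField.adjoin.finiteDimensional hint
  rw [absDiscC, dif_pos hfin]
  haveI : NumberField (IntermediateField.adjoin ℚ {α}) := ⟨⟩
  set K := IntermediateField.adjoin ℚ {α} with hK
  let pb : PowerBasis ℚ K := IntermediateField.adjoin.powerBasis hint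
  have hdim : pb.dim = n := by rw [← hn, pb.finrank]
  have hgen : pb.gen = IntermediateField.AdjoinSimple.gen ℚ α :=
    IntermediateField.adjoin.powerBasis_gen hint
  have hgi : IsIntegral ℤ pb.gen := by
    rw [hgen]
    refine (isIntegral_algebraMap_iff (A := K) (B := ℂ) (algebraMap K ℂ).injective).1 ?_
    rwa [IntermediateField.AdjoinSimple.algebraMap_gen]
  let e := (NumberField.integralBasis K).indexEquiv pb.basis
  let b := (NumberField.integralBasis K).reindex e
  have hb : Algebra.discr ℚ b = (NumberField.discr K : ℚ) := by
    rw [NumberField.coe_discr]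
    simp only [b, Module.Basis.coe_reindex, Algebra.discr_reindex]
  have hP : ∃ P : Matrix (Fin pb.dim) (Fin pb.dim) ℤ,
      b.toMatrix pb.basis = P.map (Int.castRingHom ℚ) := by
    refine ⟨fun i j => (NumberField.RingOfIntegers.basis K).repr
      ⟨pb.gen ^ (j : ℕ), hgi.pow _⟩ (e.symm i), ?_⟩
    ext i j
    have := NumberField.integralBasis_repr_apply K ⟨pb.gen ^ (j : ℕ), hgi.pow _⟩ (e.symm i)
    simp only [Module.Basis.toMatrix_apply, b, Module.Basis.repr_reindex_apply, Matrix.map_apply,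
      pb.basis_eq_pow]
    exact this
  obtain ⟨P, hP⟩ := hP
  have hdisc : Algebra.discr ℚ pb.basis = ((P.det : ℤ) : ℚ) ^ 2 * (NumberField.discr K : ℚ) := by
    rw [← hb]
    have h1 := Algebra.discr_of_matrix_vecMul (A := ℚ) b (b.toMatrix pb.basis)
    rw [Module.Basis.toMatrix_map_vecMul, hP] at h1
    rw [h1]
    congr 2
    exact ((Int.castRingHom ℚ).map_det P).symm
  have hne : Algebra.discr ℚ pb.basis ≠ 0 := Algebra.discr_not_zero_of_basis ℚ pb.basis
  have hdet : P.det ≠ 0 := by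
    intro h0; rw [hdisc, h0] at hne; simp at hne
  have hle : ((NumberField.discr K).natAbs : ℝ) ≤ ‖algebraMap ℚ ℂ (Algebra.discr ℚ pb.basis)‖ := by
    rw [hdisc]
    simp only [map_mul, map_pow, map_intCast, norm_mul, norm_pow, Complex.norm_intCast,
      Nat.cast_natAbs, Int.cast_abs]
    have : (1 : ℝ) ≤ |(P.det : ℝ)| := by exact_mod_cast Int.one_le_abs hdet
    have : (1 : ℝ) ≤ |(P.det : ℝ)| ^ 2 := one_le_pow₀ this
    nlinarith [abs_nonneg ((NumberField.discr K : ℤ) : ℝ)]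
  refine hle.trans ?_
  let ee : Fin pb.dim ≃ (K →ₐ[ℚ] ℂ) := (Fintype.equivOfCardEq (by
    rw [Fintype.card_fin, AlgHom.card, pb.finrank]))
  rw [Algebra.discr_powerBasis_eq_prod ℚ ℂ pb ee, norm_prod]
  calc ∏ i, ‖∏ j ∈ Finset.Ioi i, (ee j pb.gen - ee i pb.gen) ^ 2‖
      ≤ ∏ i : Fin pb.dim, ((2 * R) ^ 2) ^ (Finset.Ioi i).card := by
        refine Finset.prod_le_prod (fun _ _ => norm_nonneg _) fun i _ => ?_
        rw [norm_prod, ← Finset.prod_const]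
        refine Finset.prod_le_prod (fun _ _ => norm_nonneg _) fun j _ => ?_
        rw [norm_pow]
        have h1 := hR (ee i)
        have h2 := hR (ee j)
        rw [← hgen] at h1 h2
        gcongr
        exact (norm_sub_le _ _).trans (by linarith)
    _ = (2 * R) ^ (n * (n - 1)) := by
        rw [Finset.prod_pow_eq_pow_sum, ← pow_mul]
        congr 1
        have : ∑ i : Fin pb.dim, (Finset.Ioi i).card = ∑ i ∈ Finset.range pb.dim, i := by
          simp only [Fin.card_Ioi]
          rw [Finset.sum_range (fun i => i)]
          rw [← Equiv.sum_comp Fin.revPerm]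
          refine Finset.sum_congr rfl fun i _ => ?_
          simp [Fin.val_rev]
          omega
        rw [this, mul_comm, Finset.sum_range_id_mul_two, hdim]

/-- `K` is generated by an integral element of trace zero all of whose conjugates are at most
`B`. -/
def SmallGen (m : ℕ) (B : ℝ) (K : IntermediateField ℚ ℂ) : Prop :=
  ∃ β : ℂ, IntermediateField.adjoin ℚ {β} = K ∧ IsIntegral ℤ β ∧ (minpoly ℤ β).natDegree = m + 1 ∧
    (minpoly ℤ β).coeff m = 0 ∧ ∀ z : ℂ, Polynomial.aeval z (minpoly ℤ β) = 0 → ‖z‖ ≤ B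

/-- The exponent. -/
def expo (m : ℕ) : ℕ := ∑ k : Fin m, (m + 1 - (k : ℕ))

theorem coeff_bound_aux {m : ℕ} {B : ℝ} (hB : 0 ≤ B) {p : Polynomial ℤ} (hp : p.Monic)
    (hd : p.natDegree = m + 1) (hz : ∀ z : ℂ, Polynomial.aeval z p = 0 → ‖z‖ ≤ B) (k : ℕ) :
    |(p.coeff k : ℝ)| ≤ B ^ (m + 1 - k) * (m + 1).choose k := by
  have := Polynomial.coeff_le_of_roots_le (f := Int.castRingHom ℂ) (B := B) k hp
    (IsAlgClosed.splits _) (by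
      intro z h
      rw [Polynomial.mem_roots (hp.map _).ne_zero, Polynomial.IsRoot.def, Polynomial.eval_map] at h
      exact hz z h)
  rw [hd, Polynomial.coeff_map] at this
  simpa using this

/-- Polynomial with given coefficients. -/
noncomputable def polyOf (m : ℕ) (c : Fin m → ℤ) : Polynomial ℤ :=
  Polynomial.X ^ (m + 1) + ∑ k : Fin m, Polynomial.C (c k) * Polynomial.X ^ (k : ℕ)

theorem sum_coeff_aux (m : ℕ) (c : Fin m → ℤ) (j : ℕ) :
    (∑ k : Fin m, Polynomial.C (c k) * Polynomial.X ^ (k : ℕ)).coeff j =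
      if h : j < m then c ⟨j, h⟩ else 0 := by
  rw [Polynomial.finsetSum_coeff]
  simp only [Polynomial.coeff_C_mul, Polynomial.coeff_X_pow]
  split_ifs with h
  · rw [Finset.sum_eq_single ⟨j, h⟩]
    · simp
    · intro b _ hb
      have : j ≠ (b : ℕ) := fun h' => hb (by ext; simp [h'])
      simp [this]
    · simp
  · refine Finset.sum_eq_zero fun b _ => ?_
    have : j ≠ (b : ℕ) := by have := b.2; omega
    simp [this]

theorem polyOf_eq {m : ℕ} {p : Polynomial ℤ} (hp : p.Monic) (hd : p.natDegree = m + 1)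
    (hm : p.coeff m = 0) : polyOf m (fun k => p.coeff k) = p := by
  ext j
  rw [polyOf, Polynomial.coeff_add, sum_coeff_aux, Polynomial.coeff_X_pow]
  rcases lt_trichotomy j (m + 1) with h | h | h
  · rw [if_neg (by omega)]
    by_cases hj : j < m
    · simp [hj]
    · have : j = m := by omega
      simp [this, hm]
  · have := hp.coeff_natDegree
    rw [hd] at this
    simp [h, this]
  · rw [if_neg (by omega), dif_neg (by omega), Polynomial.coeff_eq_zero_of_natDegree_lt (by omega)]
    simp

theorem polyOf_natDegree_le (m : ℕ) (c : Fin m → ℤ) : (polyOf m c).natDegree ≤ m + 1 := by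
  rw [Polynomial.natDegree_le_iff_coeff_eq_zero]
  intro N hN
  rw [polyOf, Polynomial.coeff_add, sum_coeff_aux, Polynomial.coeff_X_pow, if_neg (by omega),
    dif_neg (by omega)]
  simp

theorem SmallGen.one_le {m : ℕ} (hm : 1 ≤ m) {B : ℝ} (hB : 0 ≤ B) {K : IntermediateField ℚ ℂ}
    (h : SmallGen m B K) : 1 ≤ B := by
  obtain ⟨β, -, hβ, hd, -, hz⟩ := h
  by_contra hlt
  rw [not_le] at hlt
  have h0 := coeff_bound_aux hB (minpoly.monic hβ) hd hz 0
  have h1 : B ^ (m + 1) < 1 := pow_lt_one₀ hB hlt (by omega)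
  simp only [tsub_zero, Nat.choose_zero_right, Nat.cast_one, mul_one] at h0
  have h2 : |(minpoly ℤ β).coeff 0| < 1 := by exact_mod_cast lt_of_le_of_lt h0 h1
  have h3 : (minpoly ℤ β).coeff 0 = 0 := Int.abs_lt_one_iff.1 h2
  have h4 : Polynomial.X ∣ minpoly ℤ β := Polynomial.X_dvd_iff.2 h3
  have h5 := (minpoly.irreducible hβ).dvd_iff.1 h4
  rcases h5 with h | h
  · exact Polynomial.not_isUnit_X h
  · have := Polynomial.natDegree_eq_of_degree_eq (Polynomial.degree_eq_degree_of_associated h)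
    rw [hd, Polynomial.natDegree_X] at this
    omega

theorem smallGen_card {m : ℕ} (hm : 1 ≤ m) {B : ℝ} (hB : 0 ≤ B)
    (T : Finset (IntermediateField ℚ ℂ)) (hT : ∀ K ∈ T, SmallGen m B K) :
    (T.card : ℝ) ≤ ((m + 1) * (2 ^ (m + 3)) ^ m : ℝ) * B ^ expo m := by
  rcases T.eq_empty_or_nonempty with rfl | ⟨K₀, hK₀⟩
  · simp; positivity
  have hB1 : 1 ≤ B := (hT K₀ hK₀).one_le hm hB
  choose! β hβ using hT
  let M : Fin m → ℕ := fun k => ⌊(2 : ℝ) ^ (m + 1) * B ^ (m + 1 - (k : ℕ))⌋₊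
  let P : Finset (Fin m → ℤ) := Fintype.piFinset fun k => Finset.Icc (-(M k : ℤ)) (M k)
  let U : Finset ℂ := P.biUnion fun c => ((polyOf m c).map (Int.castRingHom ℂ)).roots.toFinset
  have hU : U.card ≤ P.card * (m + 1) := by
    refine Finset.card_biUnion_le_card_mul _ _ _ fun c _ => ?_
    refine (Multiset.toFinset_card_le _).trans ((Polynomial.card_roots' _).trans ?_)
    exact (Polynomial.natDegree_map_le).trans (polyOf_natDegree_le m c)
  have hTU : T.card ≤ U.card := by
    refine Finset.card_le_card_of_injOn β ?_ ?_
    · intro K hK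
      obtain ⟨h1, h2, h3, h4, h5⟩ := hβ K hK
      have hmon := minpoly.monic h2
      simp only [U, Finset.coe_biUnion, Set.mem_iUnion, Finset.mem_coe]
      refine ⟨fun k => (minpoly ℤ (β K)).coeff k, ?_, ?_⟩
      · rw [Fintype.mem_piFinset]
        intro k
        have h6 := coeff_bound_aux hB hmon h3 h5 k
        have h7 : (((m + 1).choose k : ℕ) : ℝ) ≤ 2 ^ (m + 1) := by
          exact_mod_cast Nat.choose_le_two_pow (m + 1) k
        have h8 : (((minpoly ℤ (β K)).coeff k).natAbs : ℝ) ≤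
            (2 : ℝ) ^ (m + 1) * B ^ (m + 1 - (k : ℕ)) := by
          rw [Nat.cast_natAbs, Int.cast_abs]
          refine h6.trans ?_
          rw [mul_comm]
          gcongr
        have h9 : ((minpoly ℤ (β K)).coeff k).natAbs ≤ M k := Nat.le_floor h8
        rw [Finset.mem_Icc]
        omega
      · rw [polyOf_eq hmon h3 h4, Multiset.mem_toFinset, Polynomial.mem_roots (hmon.map _).ne_zero,
          Polynomial.IsRoot.def, Polynomial.eval_map]
        exact minpoly.aeval ℤ (β K)
    · intro K hK K' hK' h
      rw [← (hβ K hK).1, ← (hβ K' hK').1, h]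
  have hP : (P.card : ℝ) ≤ (2 ^ (m + 3)) ^ m * B ^ expo m := by
    rw [Fintype.card_piFinset, Nat.cast_prod, expo, ← Finset.prod_pow_eq_pow_sum]
    calc ∏ k : Fin m, ((Finset.Icc (-(M k : ℤ)) (M k)).card : ℝ)
        ≤ ∏ k : Fin m, ((2 : ℝ) ^ (m + 3) * B ^ (m + 1 - (k : ℕ))) := by
          refine Finset.prod_le_prod (fun _ _ => by positivity) fun k _ => ?_
          have h1 : (Finset.Icc (-(M k : ℤ)) (M k)).card = 2 * M k + 1 := by
            rw [Int.card_Icc]; omega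
          rw [h1]
          push_cast
          have h2 : (M k : ℝ) ≤ (2 : ℝ) ^ (m + 1) * B ^ (m + 1 - (k : ℕ)) :=
            Nat.floor_le (by positivity)
          have h3 : (1 : ℝ) ≤ (2 : ℝ) ^ (m + 1) * B ^ (m + 1 - (k : ℕ)) :=
            one_le_mul_of_one_le_of_one_le (one_le_pow₀ (by norm_num)) (one_le_pow₀ hB1)
          have h4 : (2 : ℝ) ^ (m + 3) = 4 * 2 ^ (m + 1) := by ring
          rw [h4]
          nlinarith
      _ = _ := by
          rw [Finset.prod_mul_distrib]; simp
  calc (T.card : ℝ) ≤ (P.card : ℝ) * (m + 1) := by exact_mod_cast hTU.trans hU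
    _ ≤ ((2 ^ (m + 3)) ^ m * B ^ expo m) * (m + 1) := by gcongr
    _ = _ := by ring

theorem trace_adjoin_aux {α : ℂ} (hint : IsIntegral ℚ α) {K : IntermediateField ℚ ℂ}
    (hK : IntermediateField.adjoin ℚ {α} = K) (x : K) (hx : (x : ℂ) = α) :
    Algebra.trace ℚ K x = -(minpoly ℚ α).nextCoeff := by
  subst hK
  rw [← trace_adjoinSimpleGen hint]
  congr 1
  apply Subtype.ext
  rw [hx, IntermediateField.AdjoinSimple.coe_gen]

theorem packing {m : ℕ} (hm : 2 ≤ m) {ι : Type*} (S : Finset ι) (f : ι → Polynomial ℤ) (α : ι → ℂ)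
    (hf : ∀ b ∈ S, GoodPoly m (f b)) (hα : ∀ b ∈ S, Polynomial.aeval (α b) (f b) = 0)
    (hinj : Set.InjOn α S) {R L : ℝ} (hL : 0 < L) {M : ℕ} (hM : R ≤ M * L)
    (hR : ∀ b ∈ S, ∀ z : ℂ, Polynomial.aeval z (f b) = 0 → ‖z‖ ≤ R)
    (K : IntermediateField ℚ ℂ) (hK : ∀ b ∈ S, IntermediateField.adjoin ℚ {α b} = K)
    (hcard : ((2 * M + 1) ^ 2) ^ (m + 1) < S.card) : SmallGen m (2 * L) K := by
  have hne : S.Nonempty := by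
    rw [← Finset.card_pos]; omega
  obtain ⟨b₀, hb₀⟩ := hne
  have hfin : FiniteDimensional ℚ K := by
    rw [← hK b₀ hb₀]
    exact IntermediateField.adjoin.finiteDimensional ((hf b₀ hb₀).isIntegral (hα b₀ hb₀)).tower_top
  have hrank : Module.finrank ℚ K = m + 1 := by
    rw [← hK b₀ hb₀, (hf b₀ hb₀).finrank (hα b₀ hb₀)]
  have hmem : ∀ b ∈ S, α b ∈ K := fun b hb => by
    rw [← hK b hb]; exact IntermediateField.mem_adjoin_simple_self ℚ _
  let x : ι → K := fun b => if h : α b ∈ K then ⟨α b, h⟩ else 0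
  have hx : ∀ b ∈ S, (x b : ℂ) = α b := fun b hb => by simp [x, hmem b hb]
  have hroot : ∀ b ∈ S, ∀ σ : K →ₐ[ℚ] ℂ, ‖σ (x b)‖ ≤ R := by
    intro b hb σ
    apply hR b hb
    have h1 : Polynomial.aeval (x b) (f b) = 0 := by
      apply (algebraMap K ℂ).injective
      rw [← Polynomial.aeval_algebraMap_apply, map_zero]
      have : algebraMap K ℂ (x b) = α b := hx b hb
      rw [this, hα b hb]
    have h2 := Polynomial.aeval_algHom_apply (σ.restrictScalars ℤ) (x b) (f b)
    rw [h1, map_zero] at h2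
    exact h2
  let cell : ι → ((K →ₐ[ℚ] ℂ) → ℤ × ℤ) :=
    fun b σ => (⌊(σ (x b)).re / L⌋, ⌊(σ (x b)).im / L⌋)
  let T : Finset ((K →ₐ[ℚ] ℂ) → ℤ × ℤ) :=
    Fintype.piFinset fun _ => Finset.Icc (-(M : ℤ)) M ×ˢ Finset.Icc (-(M : ℤ)) M
  have hTcard : T.card = ((2 * M + 1) ^ 2) ^ (m + 1) := by
    rw [Fintype.card_piFinset]
    simp only [Finset.card_product, Int.card_Icc, Finset.prod_const, Finset.card_univ]
    rw [AlgHom.card, hrank]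
    congr 1
    rw [show ((M : ℤ) + 1 - -(M : ℤ)).toNat = 2 * M + 1 by omega, sq]
  have hfloor : ∀ y : ℝ, |y| ≤ R → ⌊y / L⌋ ∈ Finset.Icc (-(M : ℤ)) M := by
    intro y hy
    have h1 : |y| ≤ M * L := hy.trans hM
    rw [abs_le] at h1
    rw [Finset.mem_Icc]
    constructor
    · rw [Int.le_floor]
      push_cast
      rw [le_div_iff₀ hL]; linarith
    · have : y / L ≤ M := by rw [div_le_iff₀ hL]; linarith
      exact_mod_cast (Int.floor_le _).trans this
  have hmaps : Set.MapsTo cell S T := by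
    intro b hb
    simp only [T, Finset.mem_coe, Fintype.mem_piFinset, Finset.mem_product]
    intro σ
    exact ⟨hfloor _ ((Complex.abs_re_le_norm _).trans (hroot b hb σ)),
      hfloor _ ((Complex.abs_im_le_norm _).trans (hroot b hb σ))⟩
  obtain ⟨b, hb, b', hb', hbb, hcell⟩ :=
    Finset.exists_ne_map_eq_of_card_lt_of_maps_to (by rw [hTcard]; exact hcard) hmaps
  have hclose : ∀ u v : ℝ, ⌊u / L⌋ = ⌊v / L⌋ → |u - v| ≤ L := by
    intro u v h
    have := Int.abs_sub_lt_one_of_floor_eq_floor h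
    rw [← sub_div, abs_div, abs_of_pos hL, div_lt_one hL] at this
    exact this.le
  set y : K := x b - x b' with hy
  set β : ℂ := (y : ℂ) with hβ
  have hβ' : β = α b - α b' := by rw [hβ, hy, ← hx b hb, ← hx b' hb']; simp
  have hβ0 : β ≠ 0 := by
    rw [hβ', sub_ne_zero]; exact fun h => hbb (hinj hb hb' h)
  have hint : IsIntegral ℤ β := by
    rw [hβ']; exact ((hf b hb).isIntegral (hα b hb)).sub ((hf b' hb').isIntegral (hα b' hb'))
  have hnext : ∀ b ∈ S, Algebra.trace ℚ K (x b) = -2 := by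
    intro b hb
    rw [trace_adjoin_aux ((hf b hb).isIntegral (hα b hb)).tower_top (hK b hb) (x b) (hx b hb),
      (hf b hb).minpoly_eq (hα b hb), Polynomial.nextCoeff_of_natDegree_pos
      (by rw [(hf b hb).monic.natDegree_map, (hf b hb).deg]; omega),
      (hf b hb).monic.natDegree_map, (hf b hb).deg, Polynomial.coeff_map, Nat.add_sub_cancel,
      (hf b hb).cm]
    simp
  have htr : Algebra.trace ℚ K y = 0 := by
    rw [hy, map_sub, hnext b hb, hnext b' hb', sub_self]
  have hbot : β ∉ (⊥ : IntermediateField ℚ ℂ) := by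
    intro h
    rw [IntermediateField.mem_bot] at h
    obtain ⟨q, hq⟩ := h
    have hyq : y = algebraMap ℚ K q := by
      apply Subtype.ext
      rw [← hβ, ← hq]; rfl
    rw [hyq, Algebra.trace_algebraMap, hrank] at htr
    have : q = 0 := by
      rcases smul_eq_zero.1 htr with h | h
      · omega
      · exact h
    rw [this, map_zero] at hq
    exact hβ0 hq.symm
  have hadj : IntermediateField.adjoin ℚ {β} = K := by
    rw [← hK b hb]
    refine (hf b hb).no_subfield hm (hα b hb) ?_ hbot
    rw [hK b hb]; exact y.2
  have hmp : minpoly ℚ β = (minpoly ℤ β).map (algebraMap ℤ ℚ) :=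
    minpoly.isIntegrallyClosed_eq_field_fractions' ℚ hint
  have hmon := minpoly.monic hint
  have hdegQ : (minpoly ℚ β).natDegree = m + 1 := by
    rw [← IntermediateField.adjoin.finrank hint.tower_top, hadj, hrank]
  have hdeg : (minpoly ℤ β).natDegree = m + 1 := by
    rw [← hmon.natDegree_map (algebraMap ℤ ℚ), ← hmp, hdegQ]
  refine ⟨β, hadj, hint, hdeg, ?_, ?_⟩
  · have h1 := trace_adjoin_aux hint.tower_top hadj y hβ.symm
    rw [htr, Polynomial.nextCoeff_of_natDegree_pos (by rw [hdegQ]; omega), hdegQ,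
      Nat.add_sub_cancel, hmp, Polynomial.coeff_map] at h1
    have h2 : (algebraMap ℤ ℚ) ((minpoly ℤ β).coeff m) = 0 := by linarith
    simpa using h2
  · intro z hz
    have hzr : z ∈ (minpoly ℚ y).rootSet ℂ := by
      have h1 : minpoly ℚ y = minpoly ℚ β :=
        (minpoly.algebraMap_eq (algebraMap K ℂ).injective y).symm
      rw [h1, Polynomial.mem_rootSet]
      refine ⟨minpoly.ne_zero hint.tower_top, ?_⟩
      rw [hmp, Polynomial.aeval_map_algebraMap, hz]
    rw [← Algebra.IsAlgebraic.range_eval_eq_rootSet_minpoly ℂ y] at hzr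
    obtain ⟨σ, rfl⟩ := hzr
    have hc := congrFun hcell σ
    simp only [cell, Prod.mk.injEq] at hc
    have h1 := hclose _ _ hc.1
    have h2 := hclose _ _ hc.2
    have h3 : σ y = σ (x b) - σ (x b') := by rw [hy, map_sub]
    simp only [h3]
    refine (Complex.norm_le_abs_re_add_abs_im _).trans ?_
    rw [Complex.sub_re, Complex.sub_im]
    linarith

/-- The family of polynomials. -/
noncomputable def fam (m : ℕ) (b : Fin m → ℕ) : Polynomial ℤ :=
  Polynomial.X ^ (m + 1) + Polynomial.C 2 * Polynomial.X ^ m + Polynomial.C 6 +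
    ∑ k : Fin m, Polynomial.C (36 * (b k : ℤ)) * Polynomial.X ^ (k : ℕ)

theorem fam_coeff (m : ℕ) (b : Fin m → ℕ) (j : ℕ) :
    (fam m b).coeff j = (if j = m + 1 then 1 else 0) + (if j = m then 2 else 0) +
      (if j = 0 then 6 else 0) + (if h : j < m then 36 * (b ⟨j, h⟩ : ℤ) else 0) := by
  rw [fam, Polynomial.coeff_add, sum_coeff_aux m (fun k => 36 * (b k : ℤ)), Polynomial.coeff_add,
    Polynomial.coeff_add, Polynomial.coeff_X_pow, Polynomial.coeff_C_mul, Polynomial.coeff_X_pow,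
    Polynomial.coeff_C]
  simp

theorem fam_coeff_lt {m : ℕ} (b : Fin m → ℕ) {j : ℕ} (h : j < m) :
    (fam m b).coeff j = (if j = 0 then 6 else 0) + 36 * (b ⟨j, h⟩ : ℤ) := by
  rw [fam_coeff, if_neg (by omega), if_neg (by omega), dif_pos h]; ring

theorem fam_natDegree (m : ℕ) (b : Fin m → ℕ) : (fam m b).natDegree = m + 1 := by
  apply le_antisymm
  · rw [Polynomial.natDegree_le_iff_coeff_eq_zero]
    intro N hN
    rw [fam_coeff, if_neg (by omega), if_neg (by omega), if_neg (by omega), dif_neg (by omega)]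
    simp
  · apply Polynomial.le_natDegree_of_ne_zero
    rw [fam_coeff, if_pos rfl, if_neg (by omega), if_neg (by omega), dif_neg (by omega)]
    simp

theorem fam_good {m : ℕ} (hm : 1 ≤ m) (b : Fin m → ℕ) : GoodPoly m (fam m b) where
  monic := by
    rw [Polynomial.Monic, Polynomial.leadingCoeff, fam_natDegree, fam_coeff, if_pos rfl,
      if_neg (by omega), if_neg (by omega), dif_neg (by omega)]
    simp
  deg := fam_natDegree m b
  cm := by
    rw [fam_coeff, if_neg (by omega), if_pos rfl, if_neg (by omega), dif_neg (by omega)]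
    simp
  dvd := by
    intro k hk
    rw [fam_coeff_lt b hk]
    split_ifs <;> omega
  not4 := by
    rw [fam_coeff_lt b (by omega : 0 < m), if_pos rfl]
    omega
  not9 := by
    rw [fam_coeff_lt b (by omega : 0 < m), if_pos rfl]
    omega

theorem fam_injective (m : ℕ) : Function.Injective (fam m) := by
  intro b b' h
  ext k
  have := congrArg (fun p => Polynomial.coeff p (k : ℕ)) h
  simp only [fam_coeff_lt _ k.2] at this
  simpa using this

theorem fam_root_bound {m H : ℕ} (hm : 1 ≤ m) (hH : 1 ≤ H) {b : Fin m → ℕ}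
    (hb : ∀ k, b k < H ^ (m + 1 - (k : ℕ))) {z : ℂ} (hz : Polynomial.aeval z (fam m b) = 0) :
    ‖z‖ ≤ 43 * H := by
  have hH' : (1 : ℝ) ≤ H := by exact_mod_cast hH
  have := root_bound_aux (fam_good hm b).monic (fam_natDegree m b) (A := 42) (H := H)
    (by norm_num) (by positivity) (by
      intro k hk
      have h1 : (1 : ℝ) ≤ (H : ℝ) ^ (m + 1 - k) := one_le_pow₀ hH'
      rcases Nat.lt_succ_iff_lt_or_eq.1 hk with h | h
      · rw [fam_coeff_lt b h]
        have h2 : ((b ⟨k, h⟩ : ℕ) : ℝ) ≤ (H : ℝ) ^ (m + 1 - k) := by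
          exact_mod_cast (hb ⟨k, h⟩).le
        have h3 : (0 : ℝ) ≤ (b ⟨k, h⟩ : ℕ) := Nat.cast_nonneg _
        split_ifs
        · push_cast; rw [abs_of_nonneg (by positivity)]; linarith
        · push_cast; rw [abs_of_nonneg (by positivity)]; linarith
      · rw [h, (fam_good hm b).cm]
        rw [h] at h1
        norm_num at h1 ⊢
        linarith) hz
  linarith

theorem comb_aux (a : ℝ) (t : ℕ → ℝ) (ht : ∀ j, 0 ≤ t j) (J d : ℕ) (ha : a ≤ t (J + d)) :
    a ≤ t J + ∑ i ∈ Finset.range d, t (J + i + 1) * (if t (J + i) < a then 1 else 0) := by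
  induction d with
  | zero => simpa using ha
  | succ d ih =>
    rw [Finset.sum_range_succ]
    by_cases h : a ≤ t (J + d)
    · have := ih h
      have h2 : 0 ≤ t (J + d + 1) * (if t (J + d) < a then 1 else 0) := by
        have := ht (J + d + 1)
        split_ifs <;> simp [this]
      linarith
    · rw [if_pos (not_le.1 h)]
      have h1 : 0 ≤ ∑ i ∈ Finset.range d, t (J + i + 1) * (if t (J + i) < a then (1 : ℝ) else 0) := by
        refine Finset.sum_nonneg fun i _ => ?_
        have := ht (J + i + 1)
        split_ifs <;> simp [this]
      have h2 := ht J
      have h3 : a ≤ t (J + d + 1) := ha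
      linarith

theorem comb_bound {κ : Type*} (s : Finset κ) (a : κ → ℝ) (t : ℕ → ℝ) (ht : ∀ j, 0 ≤ t j) {D : ℝ}
    (hD : 0 ≤ D) (J d : ℕ) (ha : ∀ k ∈ s, a k ≤ t (J + d))
    (hcnt : ∀ j, t (j + 1) * ((s.filter fun k => t j < a k).card : ℝ) ≤ D * (1 / 2) ^ j) :
    ∑ k ∈ s, a k ≤ t J * s.card + 2 * D * (1 / 2) ^ J := by
  calc ∑ k ∈ s, a k
      ≤ ∑ k ∈ s, (t J + ∑ i ∈ Finset.range d, t (J + i + 1) * (if t (J + i) < a k then 1 else 0)) :=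
        Finset.sum_le_sum fun k hk => comb_aux (a k) t ht J d (ha k hk)
    _ = t J * s.card + ∑ i ∈ Finset.range d,
          t (J + i + 1) * ((s.filter fun k => t (J + i) < a k).card : ℝ) := by
        rw [Finset.sum_add_distrib, Finset.sum_comm, Finset.sum_const, nsmul_eq_mul, mul_comm]
        congr 1
        refine Finset.sum_congr rfl fun i _ => ?_
        rw [← Finset.mul_sum, Finset.sum_boole]
    _ ≤ t J * s.card + ∑ i ∈ Finset.range d, D * (1 / 2) ^ (J + i) := by
        exact add_le_add le_rfl (Finset.sum_le_sum fun i _ => hcnt (J + i))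
    _ = t J * s.card + D * (1 / 2) ^ J * ∑ i ∈ Finset.range d, (1 / 2 : ℝ) ^ i := by
        rw [Finset.mul_sum]
        congr 1
        refine Finset.sum_congr rfl fun i _ => ?_
        rw [pow_add]; ring
    _ ≤ t J * s.card + D * (1 / 2) ^ J * 2 := by
        gcongr
        exact sum_geometric_two_le d
    _ = _ := by ring

theorem expo_eq (m : ℕ) : 2 * expo m = m * (m + 3) := by
  have h : expo m = ∑ k ∈ Finset.range m, (k + 2) := by
    rw [expo, Fin.sum_univ_eq_sum_range (fun k => m + 1 - k) m, ← Finset.sum_range_reflect]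
    refine Finset.sum_congr rfl fun k hk => ?_
    have := Finset.mem_range.1 hk
    omega
  rw [h, Finset.sum_add_distrib, Finset.sum_const, Finset.card_range, mul_add, mul_comm 2 (∑ i ∈ _, i),
    Finset.sum_range_id_mul_two, smul_eq_mul]
  cases m with
  | zero => rfl
  | succ k => simp only [Nat.add_sub_cancel]; ring

theorem fam_disc {m H : ℕ} (hm : 1 ≤ m) (hH : 1 ≤ H) {b : Fin m → ℕ}
    (hb : ∀ k, b k < H ^ (m + 1 - (k : ℕ))) {α : ℂ} (hα : Polynomial.aeval α (fam m b) = 0) :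
    (absDiscC (IntermediateField.adjoin ℚ {α}) : ℝ) ≤ (86 * (H : ℝ)) ^ ((m + 1) * m) := by
  have h := absDiscC_bound ((fam_good hm b).isIntegral hα) ((fam_good hm b).finrank hα)
    (R := 43 * H) (by
      intro φ
      apply fam_root_bound hm hH hb
      have h1 : Polynomial.aeval (IntermediateField.AdjoinSimple.gen ℚ α) (fam m b) = 0 := by
        apply (algebraMap (IntermediateField.adjoin ℚ {α}) ℂ).injective
        rw [← Polynomial.aeval_algebraMap_apply, IntermediateField.AdjoinSimple.algebraMap_gen, hα,
          map_zero]
      have h2 := congrArg φ h1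
      rw [map_zero] at h2
      rw [← h2]
      exact (Polynomial.aeval_algHom_apply (φ.restrictScalars ℤ) _ _))
  have e : 2 * (43 * (H : ℝ)) = 86 * H := by ring
  rw [e] at h
  exact h

theorem numeric_aux {m j e : ℕ} (he : 2 * m + 3 ≤ e) {C H : ℝ} (hC : 0 ≤ C) (hH : 0 ≤ H) :
    ((2 * (43 * 2 ^ (j + 1)) + 1 : ℝ) ^ 2) ^ (m + 1) * (C * (2 * (H / 2 ^ j)) ^ e) ≤
      (174 ^ (2 * m + 2) * C * 2 ^ e * H ^ e) * (1 / 2) ^ j := by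
  have hx : (1 : ℝ) ≤ 2 ^ j := one_le_pow₀ (by norm_num)
  set x : ℝ := 2 ^ j with hxd
  have hx0 : 0 < x := by linarith
  have h1 : ((2 * (43 * 2 ^ (j + 1)) + 1 : ℝ) ^ 2) ^ (m + 1) ≤ (174 * x) ^ (2 * m + 2) := by
    rw [← pow_mul, show 2 * (m + 1) = 2 * m + 2 by ring]
    apply pow_le_pow_left₀ (by positivity)
    rw [pow_succ, ← hxd]
    linarith
  have h2 : (2 * (H / x)) ^ e ≤ 2 ^ e * H ^ e * (1 / x) ^ (2 * m + 3) := by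
    have : (2 * (H / x)) ^ e = 2 ^ e * H ^ e * (1 / x) ^ e := by
      rw [← mul_pow, ← mul_pow]; congr 1; ring
    rw [this]
    apply mul_le_mul_of_nonneg_left _ (by positivity)
    apply pow_le_pow_of_le_one (by positivity) _ he
    rw [div_le_one hx0]; exact hx
  calc _ ≤ (174 * x) ^ (2 * m + 2) * (C * (2 ^ e * H ^ e * (1 / x) ^ (2 * m + 3))) := by
        gcongr
    _ = (174 ^ (2 * m + 2) * C * 2 ^ e * H ^ e) * (x ^ (2 * m + 2) * (1 / x) ^ (2 * m + 3)) := by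
        rw [mul_pow]; ring
    _ = _ := by
        congr 1
        rw [pow_succ (1 / x), ← mul_assoc, ← mul_pow, mul_one_div_cancel hx0.ne', one_pow, one_mul,
          hxd, one_div_pow]

theorem many_fields {m : ℕ} (hm : 6 ≤ m) : ∃ c : ℝ, 0 < c ∧ ∀ H : ℕ, 1 ≤ H →
    ∃ 𝒦 : Finset (IntermediateField ℚ ℂ),
      (∀ K ∈ 𝒦, Module.finrank ℚ K = m + 1 ∧
        (absDiscC K : ℝ) ≤ (86 * (H : ℝ)) ^ ((m + 1) * m)) ∧
      c * (H : ℝ) ^ expo m ≤ (𝒦.card : ℝ) := by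
  set C : ℝ := ((m + 1) * (2 ^ (m + 3)) ^ m : ℝ) with hC
  have hC0 : 0 < C := by positivity
  set D' : ℝ := 174 ^ (2 * m + 2) * C * 2 ^ expo m with hD'
  have hD0 : 0 < D' := by positivity
  obtain ⟨J, hJ⟩ := exists_pow_lt_of_lt_one (show (0 : ℝ) < 1 / (4 * D') by positivity)
    (show (1 / 2 : ℝ) < 1 by norm_num)
  let t : ℕ → ℕ := fun j => ((2 * (43 * 2 ^ j) + 1) ^ 2) ^ (m + 1)
  have ht0 : ∀ j, 0 < t j := fun j => by positivity
  refine ⟨1 / (2 * t J), by have := ht0 J; positivity, ?_⟩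
  intro H hH
  have hH' : (0 : ℝ) < H := by exact_mod_cast hH
  have hroot : ∀ b : Fin m → ℕ, ∃ z : ℂ, Polynomial.aeval z (fam m b) = 0 := by
    intro b
    obtain ⟨z, hz⟩ := IsAlgClosed.exists_aeval_eq_zero_of_injective ℂ
      (algebraMap ℤ ℂ).injective_int (fam m b) (by
        rw [Polynomial.degree_eq_natDegree (fam_good (by omega) b).monic.ne_zero, fam_natDegree]
        exact_mod_cast Nat.succ_ne_zero m)
    exact ⟨z, hz⟩
  choose α hα using hroot
  have hαinj : Function.Injective α := by
    intro b b' h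
    apply fam_injective m
    have h1 := (fam_good (by omega : 1 ≤ m) b).minpoly_eq (hα b)
    have h2 := (fam_good (by omega : 1 ≤ m) b').minpoly_eq (hα b')
    rw [h] at h1
    exact Polynomial.map_injective _ (Int.castRingHom ℚ).injective_int (h1.symm.trans h2)
  let P : Finset (Fin m → ℕ) := Fintype.piFinset fun k => Finset.range (H ^ (m + 1 - (k : ℕ)))
  have hP : ∀ b ∈ P, ∀ k, b k < H ^ (m + 1 - (k : ℕ)) := fun b hb k =>
    Finset.mem_range.1 (Fintype.mem_piFinset.1 hb k)
  have hPcard : P.card = H ^ expo m := by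
    rw [Fintype.card_piFinset]
    simp only [Finset.card_range]
    rw [Finset.prod_pow_eq_pow_sum, expo]
  let Kf : (Fin m → ℕ) → IntermediateField ℚ ℂ := fun b => IntermediateField.adjoin ℚ {α b}
  let S : IntermediateField ℚ ℂ → Finset (Fin m → ℕ) := fun K => P.filter fun b => Kf b = K
  refine ⟨P.image Kf, ?_, ?_⟩
  · intro K hK
    obtain ⟨b, hb, rfl⟩ := Finset.mem_image.1 hK
    exact ⟨(fam_good (by omega) b).finrank (hα b), fam_disc (by omega) hH (hP b hb) (hα b)⟩
  have hsum : ∑ K ∈ P.image Kf, ((S K).card : ℝ) = (H : ℝ) ^ expo m := by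
    rw [← Nat.cast_sum]
    have := Finset.card_eq_sum_card_image Kf P
    rw [← this, hPcard]; push_cast; rfl
  have hexp : 2 * m + 3 ≤ expo m := by
    have := expo_eq m
    nlinarith
  have hmain := comb_bound (P.image Kf) (fun K => ((S K).card : ℝ)) (fun j => (t j : ℝ))
    (fun j => Nat.cast_nonneg _) (D := D' * (H : ℝ) ^ expo m) (by positivity) J P.card
    (by
      intro K _
      have h1 : (S K).card ≤ P.card := Finset.card_filter_le _ _
      have h2 : P.card < 2 ^ P.card := Nat.lt_two_pow_self
      have h3 : 2 ^ P.card ≤ 2 ^ (J + P.card) := Nat.pow_le_pow_right (by norm_num) (by omega)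
      have h4 : 2 * (43 * 2 ^ (J + P.card)) + 1 ≤ t (J + P.card) := by
        show _ ≤ ((2 * (43 * 2 ^ (J + P.card)) + 1) ^ 2) ^ (m + 1)
        rw [← pow_mul]
        exact Nat.le_self_pow (by omega) _
      have h5 : (S K).card ≤ t (J + P.card) := by omega
      exact_mod_cast h5)
    (by
      intro j
      have hcount := smallGen_card (m := m) (B := 2 * ((H : ℝ) / 2 ^ j)) (by omega) (by positivity)
        ((P.image Kf).filter fun K => (t j : ℝ) < ((S K).card : ℝ)) (by
          intro K hK
          have hlt : t j < (S K).card := by exact_mod_cast (Finset.mem_filter.1 hK).2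
          refine packing (by omega : 2 ≤ m) (S K) (fam m) α (fun b _ => fam_good (by omega) b)
            (fun b _ => hα b) hαinj.injOn (R := 43 * H) (L := (H : ℝ) / 2 ^ j) (by positivity)
            (M := 43 * 2 ^ j) ?_ ?_ K ?_ hlt
          · push_cast
            apply le_of_eq
            field_simp
          · intro b hb z hz
            exact fam_root_bound (by omega) hH (hP b (Finset.mem_filter.1 hb).1) hz
          · intro b hb
            exact (Finset.mem_filter.1 hb).2)
      have hnum := numeric_aux (j := j) hexp hC0.le hH'.le
      refine le_trans ?_ hnum
      have htj : ((t (j + 1) : ℕ) : ℝ) = ((2 * (43 * 2 ^ (j + 1)) + 1 : ℝ) ^ 2) ^ (m + 1) := by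
        simp only [t]; push_cast; rfl
      rw [htj]
      exact mul_le_mul_of_nonneg_left hcount (by positivity))
  rw [hsum] at hmain
  have htJ : (0 : ℝ) < t J := by exact_mod_cast ht0 J
  have hHe : (0 : ℝ) < (H : ℝ) ^ expo m := by positivity
  have hJ2 : 2 * (D' * (H : ℝ) ^ expo m) * (1 / 2) ^ J ≤ (H : ℝ) ^ expo m / 2 := by
    have : D' * (1 / 2) ^ J ≤ 1 / 4 := by
      rw [lt_div_iff₀ (by positivity)] at hJ
      linarith
    nlinarith
  rw [div_mul_eq_mul_div, one_mul, div_le_iff₀ (by positivity)]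
  linarith

theorem fields_finite {n : ℕ} (hn : 0 < n) (X : ℝ) :
    {K : IntermediateField ℚ ℂ | Module.finrank ℚ K = n ∧ (absDiscC K : ℝ) ≤ X}.Finite := by
  refine ((NumberField.finite_of_discr_bdd ℂ ⌊X⌋₊).image Subtype.val).subset ?_
  rintro K ⟨h1, h2⟩
  have hfd : FiniteDimensional ℚ K := Module.finite_of_finrank_pos (by omega)
  refine ⟨⟨K, hfd⟩, ?_, rfl⟩
  rw [absDiscC, dif_pos hfd] at h2
  have h3 := Nat.le_floor h2
  simp only [Set.mem_ofPred_eq]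
  rw [Int.abs_eq_natAbs]
  exact_mod_cast h3

/-- **Bhargava–Shankar–Wang.** For each degree `n ≥ 7` there is a constant `c > 0` such
that for all sufficiently large real `X`, the number of degree-`n` subfields `K ⊂ ℂ`
with `D_K ≤ X` is at least `c · X^{1/2 + 1/n}`. -/
theorem count_degree_n_fields_lower (n : ℕ) (hn : 7 ≤ n) :
    ∃ c : ℝ, 0 < c ∧ ∃ X₀ : ℝ, ∀ X : ℝ, X₀ ≤ X →
      c * X ^ ((1 : ℝ) / 2 + 1 / (n : ℝ)) ≤
        (Nat.card {K : IntermediateField ℚ ℂ //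
          Module.finrank ℚ K = n ∧ (absDiscC K : ℝ) ≤ X} : ℝ) := by
  obtain ⟨m, rfl⟩ : ∃ m, n = m + 1 := ⟨n - 1, by omega⟩
  have hm : 6 ≤ m := by omega
  obtain ⟨c, hc, hmany⟩ := many_fields hm
  have hm0 : (0 : ℝ) < m := by exact_mod_cast (by omega : 0 < m)
  set N : ℕ := (m + 1) * m with hN
  have hN0 : N ≠ 0 := by positivity
  have hN0' : (0 : ℝ) < N := by positivity
  refine ⟨c * (1 / 172) ^ expo m, by positivity, (172 : ℝ) ^ N, fun X hX => ?_⟩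
  have hX0 : 0 < X := lt_of_lt_of_le (by positivity) hX
  set Y : ℝ := X ^ ((1 : ℝ) / N) with hY
  have hYN : Y ^ N = X := by
    rw [hY, one_div]
    exact Real.rpow_inv_natCast_pow hX0.le hN0
  have hY0 : 0 ≤ Y := Real.rpow_nonneg hX0.le _
  have hY1 : 172 ≤ Y := by
    rw [← hYN] at hX
    exact le_of_pow_le_pow_left₀ hN0 hY0 hX
  set H : ℕ := ⌊Y / 86⌋₊ with hH
  have hHle : (H : ℝ) ≤ Y / 86 := Nat.floor_le (by positivity)
  have hHlt : Y / 86 < H + 1 := Nat.lt_floor_add_one _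
  have hH1 : 1 ≤ H := Nat.le_floor (by push_cast; linarith)
  have hHge : Y / 172 ≤ H := by linarith
  obtain ⟨F, hF, hcard⟩ := hmany H hH1
  have hfin := fields_finite (n := m + 1) (by omega) X
  have hsub : (F : Set (IntermediateField ℚ ℂ)) ⊆
      {K : IntermediateField ℚ ℂ | Module.finrank ℚ K = m + 1 ∧ (absDiscC K : ℝ) ≤ X} := by
    intro K hK
    refine ⟨(hF K hK).1, (hF K hK).2.trans ?_⟩
    rw [← hYN]
    exact pow_le_pow_left₀ (by positivity) (by linarith) _
  have hle : F.card ≤ Nat.card {K : IntermediateField ℚ ℂ //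
      Module.finrank ℚ K = m + 1 ∧ (absDiscC K : ℝ) ≤ X} := by
    have := Set.ncard_le_ncard hsub hfin
    rw [Set.ncard_coe_finset] at this
    exact this
  have hle' : (F.card : ℝ) ≤ (Nat.card {K : IntermediateField ℚ ℂ //
      Module.finrank ℚ K = m + 1 ∧ (absDiscC K : ℝ) ≤ X} : ℝ) := by exact_mod_cast hle
  refine le_trans ?_ (hcard.trans hle')
  have hpow : X ^ ((1 : ℝ) / 2 + 1 / ((m + 1 : ℕ) : ℝ)) = Y ^ expo m := by
    rw [hY, ← Real.rpow_natCast, ← Real.rpow_mul hX0.le]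
    congr 1
    have he : (2 : ℝ) * (expo m : ℝ) = m * (m + 3) := by exact_mod_cast expo_eq m
    rw [hN]
    push_cast
    field_simp
    linarith
  rw [hpow, mul_assoc, ← mul_pow]
  apply mul_le_mul_of_nonneg_left _ hc.le
  apply pow_le_pow_left₀ (by positivity)
  linarith
end

section
/- Fix a degree n ≥ 2, a prime ℓ, and a real number Δ ≥ 0. Suppose that for every ε > 0 there exists a constant C such that for every integer D > 1 there are at most C · D^{Δ+ε} subfields M ⊂ ℂ with [M:ℚ] = nℓ and D_M = D. Then for every ε > 0 there exists a constant C' such that every number field K of degree n over ℚ satisfies |Cl_K[ℓ]| ≤ C' · D_K^{ℓΔ+ε}. -/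
open NumberField
open scoped Classical

/-- The order of the `ℓ`-torsion subgroup of the class group of a number field `K`. -/
noncomputable def clTor (K : Type*) [Field K] (ℓ : ℕ) : ℕ :=
  Nat.card {c : ClassGroup (𝓞 K) // c ^ ℓ = 1}

open Polynomial nonZeroDivisors

theorem pow_mem_frac {K : Type*} [Field K] [NumberField K] (ℓ : ℕ) 
    (I : FractionalIdeal (𝓞 K)⁰ K) (α : K) (hI : I ^ ℓ = FractionalIdeal.spanSingleton _ α)
    (a : K) (ha : a ∈ I) : ∃ r : 𝓞 K, a ^ ℓ = r * α := by
  have h : a ^ ℓ ∈ I ^ ℓ := by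
    rw [← FractionalIdeal.mem_coe, FractionalIdeal.coe_pow]
    exact Submodule.pow_mem_pow _ ha ℓ
  rw [hI, FractionalIdeal.mem_spanSingleton] at h
  obtain ⟨r, hr⟩ := h
  exact ⟨r, by rw [← hr, Algebra.smul_def]⟩

theorem integral_of_pow {K L : Type*} [Field K] [NumberField K] [Field L] [NumberField L]
    [Algebra K L] (ℓ : ℕ) (hℓ : 0 < ℓ) (y : L) (r : 𝓞 K) (h : y ^ ℓ = algebraMap K L r) :
    ∃ y' : 𝓞 L, (y' : L) = y := by
  have : IsIntegral ℤ y := by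
    apply IsIntegral.of_pow hℓ
    rw [h]
    exact (RingOfIntegers.isIntegral_coe r).algebraMap
  exact ⟨⟨y, this⟩, rfl⟩

theorem l_mem_different {K L : Type*} [Field K] [NumberField K] [Field L] [NumberField L]
    [Algebra K L] (ℓ : ℕ) (hℓ : ℓ.Prime) (I : (FractionalIdeal (𝓞 K)⁰ K)ˣ) (α : K) (x : L)
    (hI : (I : FractionalIdeal (𝓞 K)⁰ K) ^ ℓ = FractionalIdeal.spanSingleton _ α)
    (hx : x ^ ℓ = algebraMap K L α) (hα : ∀ b : K, b ^ ℓ ≠ α)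
    (hgen : Algebra.adjoin K {x} = ⊤) : (ℓ : 𝓞 L) ∈ differentIdeal (𝓞 K) (𝓞 L) := by
  have hα0 : α ≠ 0 := fun h => hα 0 (by simp [h, hℓ.ne_zero])
  have hx0 : x ≠ 0 := by
    rintro rfl
    rw [zero_pow hℓ.ne_zero] at hx
    exact hα0 ((map_eq_zero _).1 hx.symm)
  have hI' : ((I⁻¹ : (FractionalIdeal (𝓞 K)⁰ K)ˣ) : FractionalIdeal (𝓞 K)⁰ K) ^ ℓ
      = FractionalIdeal.spanSingleton _ α⁻¹ := by
    rw [← FractionalIdeal.spanSingleton_inv, ← hI]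
    simp
  set J : FractionalIdeal (𝓞 K)⁰ K := ((I⁻¹ : (FractionalIdeal (𝓞 K)⁰ K)ˣ) : FractionalIdeal (𝓞 K)⁰ K)
    with hJ
  let S : Set (𝓞 L) := {y | ∃ b ∈ J, (y : L) = algebraMap K L b * x}
  have hS : Ideal.span S = ⊤ := by
    have key : ∀ z ∈ (I : FractionalIdeal (𝓞 K)⁰ K) * J, ∃ w ∈ Ideal.span S, (w : L) = algebraMap K L z := by
      intro z hz
      refine FractionalIdeal.mul_induction_on hz ?_ ?_
      · intro a ha b hb
        obtain ⟨r, hr⟩ := pow_mem_frac ℓ _ _ hI a ha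
        obtain ⟨s, hs⟩ := pow_mem_frac ℓ _ _ hI' b hb
        obtain ⟨u, hu⟩ := integral_of_pow (K := K) (L := L) ℓ hℓ.pos (algebraMap K L a / x) r (by
          rw [div_pow, hx, ← map_pow, hr, ← map_div₀]; field_simp)
        obtain ⟨v, hv⟩ := integral_of_pow (K := K) (L := L) ℓ hℓ.pos (algebraMap K L b * x) s (by
          rw [mul_pow, hx, ← map_pow, hs, ← map_mul]; field_simp)
        refine ⟨u * v, Ideal.mul_mem_left _ _ (Ideal.subset_span ⟨b, hb, hv⟩), ?_⟩
        change (u : L) * (v : L) = _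
        rw [hu, hv, map_mul]
        field_simp
      · rintro a b ⟨u, hu, hu'⟩ ⟨v, hv, hv'⟩
        exact ⟨u + v, Ideal.add_mem _ hu hv, by
          change (u : L) + (v : L) = _
          rw [map_add, hu', hv']⟩
    obtain ⟨w, hw, hw'⟩ := key 1 (by rw [hJ, Units.mul_inv]; exact FractionalIdeal.one_mem_one _)
    rw [map_one] at hw'
    rw [Ideal.eq_top_iff_one]
    have : w = 1 := by ext; simpa using hw'
    rwa [← this]
  have hfd : FiniteDimensional K L := Module.Finite.of_restrictScalars_finite ℚ K L
  have h1 : ∀ y ∈ S, (ℓ : 𝓞 L) * y ^ (ℓ - 1) ∈ differentIdeal (𝓞 K) (𝓞 L) := by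
    rintro y ⟨b, hb, hy⟩
    by_cases hb0 : b = 0
    · have : y = 0 := by ext; simp [hy, hb0]
      rw [this, zero_pow (by have := hℓ.two_le; omega)]; simp
    obtain ⟨s, hs⟩ := pow_mem_frac ℓ _ _ hI' b hb
    have hb0' : algebraMap K L b ≠ 0 := by simpa using hb0
    have hyl : (y : L) ^ ℓ = algebraMap K L s := by
      rw [hy, mul_pow, hx, ← map_pow, hs, ← map_mul]; field_simp
    have hirr : Irreducible (X ^ ℓ - C (s : K)) := by
      apply X_pow_sub_C_irreducible_of_prime hℓ
      intro c hc
      apply hα (c / b)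
      rw [div_pow, hc, hs]
      have : (s : K) ≠ 0 := by
        intro h; rw [h, zero_mul] at hs; exact hb0 (pow_eq_zero_iff hℓ.ne_zero |>.1 hs)
      field_simp
    have hmK : minpoly K (y : L) = X ^ ℓ - C (s : K) := by
      symm
      apply minpoly.eq_of_irreducible_of_monic hirr
      · simp [hyl]
      · exact monic_X_pow_sub_C _ hℓ.ne_zero
    have hm : minpoly (𝓞 K) y = X ^ ℓ - C s := by
      apply Polynomial.map_injective (algebraMap (𝓞 K) K) RingOfIntegers.coe_injective
      rw [← minpoly.isIntegrallyClosed_eq_field_fractions K L (Algebra.IsIntegral.isIntegral y), hmK]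
      simp
    have := aeval_derivative_mem_differentIdeal (𝓞 K) K L y (by
      rw [eq_top_iff, ← hgen]
      apply Algebra.adjoin_le
      rw [Set.singleton_subset_iff]
      have : x = b⁻¹ • (y : L) := by
        rw [hy, Algebra.smul_def, map_inv₀]; field_simp
      rw [this]
      exact Subalgebra.smul_mem _ (Algebra.self_mem_adjoin_singleton _ _) _)
    rw [hm] at this
    simpa [derivative_X_pow] using this
  have h2 := Ideal.span_pow_eq_top S hS (ℓ - 1)
  have h3 : Ideal.span (Set.image (fun x => x ^ (ℓ - 1)) S) ≤
      Submodule.comap (LinearMap.mulLeft (𝓞 L) (ℓ : 𝓞 L)) (differentIdeal (𝓞 K) (𝓞 L)) := by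
    rw [Ideal.span_le]
    rintro _ ⟨y, hy, rfl⟩
    exact h1 y hy
  rw [h2] at h3
  simpa using h3 (show (1 : 𝓞 L) ∈ ⊤ from trivial)

theorem discr_form {K L : Type*} [Field K] [NumberField K] [Field L] [NumberField L]
    [Algebra K L] (ℓ d : ℕ) (hℓ : ℓ.Prime) (h : (ℓ : 𝓞 L) ∈ differentIdeal (𝓞 K) (𝓞 L))
    (hKL : Module.finrank K L = ℓ) (hL : Module.finrank ℚ L = d) :
    ∃ j ≤ d, (NumberField.discr L).natAbs = ℓ ^ j * (NumberField.discr K).natAbs ^ ℓ := by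
  rw [natAbs_discr_eq_absNorm_differentIdeal_mul_natAbs_discr_pow K (𝓞 K) L (𝓞 L), hKL]
  have : Ideal.absNorm (differentIdeal (𝓞 K) (𝓞 L)) ∣ ℓ ^ d := by
    have h2 := Ideal.absNorm_dvd_norm_of_mem h
    have h3 : Algebra.norm ℤ (ℓ : 𝓞 L) = (ℓ : ℤ) ^ d := by
      have := Algebra.norm_algebraMap_of_basis (RingOfIntegers.basis L) (ℓ : ℤ)
      simp only [map_natCast] at this
      rw [this, ← Module.finrank_eq_card_basis (RingOfIntegers.basis L), RingOfIntegers.rank, hL]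
    rw [h3] at h2
    exact_mod_cast h2
  obtain ⟨j, hj, hj'⟩ := (Nat.dvd_prime_pow hℓ).1 this
  exact ⟨j, hj, by rw [hj']⟩

theorem frac_torsion {K : Type*} [Field K] [NumberField K] (ℓ : ℕ) (hℓ : 0 < ℓ)
    (I : (FractionalIdeal (𝓞 K)⁰ K)ˣ) (h : I ^ ℓ = 1) : I = 1 := by
  have key : ∀ J : (FractionalIdeal (𝓞 K)⁰ K)ˣ, J ^ ℓ = 1 →
      (J : FractionalIdeal (𝓞 K)⁰ K) ≤ 1 := by
    intro J hJ a ha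
    have hJ' : (J : FractionalIdeal (𝓞 K)⁰ K) ^ ℓ = FractionalIdeal.spanSingleton _ 1 := by
      rw [FractionalIdeal.spanSingleton_one, ← Units.val_pow_eq_pow_val, hJ, Units.val_one]
    obtain ⟨r, hr⟩ := pow_mem_frac ℓ _ _ hJ' a ha
    obtain ⟨y, hy⟩ := integral_of_pow (K := K) (L := K) ℓ hℓ a r (by simpa using hr)
    exact FractionalIdeal.mem_one_iff _ |>.2 ⟨y, hy⟩
  ext1
  refine le_antisymm (key I h) ?_
  have h2 := key I⁻¹ (by rw [inv_pow, h, inv_one])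
  calc ((1 : (FractionalIdeal (𝓞 K)⁰ K)ˣ) : FractionalIdeal (𝓞 K)⁰ K)
      = ((I⁻¹ : (FractionalIdeal (𝓞 K)⁰ K)ˣ) : FractionalIdeal (𝓞 K)⁰ K) * I := by
        rw [Units.inv_mul, Units.val_one]
    _ ≤ 1 * I := by gcongr
    _ = I := one_mul _

theorem selmer_exists {K : Type*} [Field K] [NumberField K] (ℓ : ℕ) (c : ClassGroup (𝓞 K))
    (h : c ^ ℓ = 1) : ∃ (I : (FractionalIdeal (𝓞 K)⁰ K)ˣ) (u : Kˣ),
      ClassGroup.equiv K c = QuotientGroup.mk I ∧ toPrincipalIdeal (𝓞 K) K u = I ^ ℓ := by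
  obtain ⟨I, hI⟩ := QuotientGroup.mk_surjective (ClassGroup.equiv K c)
  have : (QuotientGroup.mk (I ^ ℓ) : _ ⧸ (toPrincipalIdeal (𝓞 K) K).range) = 1 := by
    rw [QuotientGroup.mk_pow, hI, ← map_pow, h, map_one]
  rw [QuotientGroup.eq_one_iff] at this
  obtain ⟨u, hu⟩ := this
  exact ⟨I, u, hI.symm, hu⟩

theorem selmer_inj {K : Type*} [Field K] [NumberField K] (ℓ : ℕ) (hℓ : 0 < ℓ)
    (c c' : ClassGroup (𝓞 K)) (I I' : (FractionalIdeal (𝓞 K)⁰ K)ˣ) (u u' v : Kˣ)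
    (hc : ClassGroup.equiv K c = QuotientGroup.mk I)
    (hc' : ClassGroup.equiv K c' = QuotientGroup.mk I')
    (hu : toPrincipalIdeal (𝓞 K) K u = I ^ ℓ) (hu' : toPrincipalIdeal (𝓞 K) K u' = I' ^ ℓ)
    (h : u = u' * v ^ ℓ) : c = c' := by
  apply (ClassGroup.equiv K).injective
  rw [hc, hc', eq_comm, QuotientGroup.eq]
  have := frac_torsion ℓ hℓ (I'⁻¹ * I * (toPrincipalIdeal (𝓞 K) K v)⁻¹) (by
    rw [mul_pow, mul_pow, inv_pow, inv_pow, ← hu, ← hu', h, map_mul, map_pow]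
    group)
  rw [mul_inv_eq_one] at this
  exact ⟨v, this.symm⟩

theorem mem_base_of_fixed {K M : Type*} [Field K] [Field M] [CharZero K] [Algebra K M] [Algebra K ℂ]
    [FiniteDimensional K M] (y : M) (z : ℂ) (h : ∀ σ : M →ₐ[K] ℂ, σ y = z) :
    ∃ k : K, algebraMap K M k = y := by
  have hint : IsIntegral K y := Algebra.IsIntegral.isIntegral y
  have h1 := Algebra.IsAlgebraic.range_eval_eq_rootSet_minpoly (F := K) (K := M) ℂ y
  have hsep : (minpoly K y).Separable := (minpoly.irreducible hint).separable
  have h2 := card_rootSet_eq_natDegree hsep (IsAlgClosed.splits ((minpoly K y).map (algebraMap K ℂ)))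
  have h3 : ((minpoly K y).rootSet ℂ) ⊆ {z} := by
    rw [← h1]
    rintro _ ⟨σ, rfl⟩
    exact h σ
  have h4 : (minpoly K y).natDegree ≤ 1 := by
    rw [← h2, ← Nat.card_eq_fintype_card]
    calc Nat.card ((minpoly K y).rootSet ℂ) ≤ Nat.card ({z} : Set ℂ) :=
          Nat.card_mono (Set.finite_singleton z) h3
      _ = 1 := by simp
  have h5 : (minpoly K y).natDegree = 1 := le_antisymm h4 (minpoly.natDegree_pos hint)
  exact minpoly.natDegree_eq_one_iff.1 h5

open IntermediateField in
theorem field_props {K : Type} [Field K] [NumberField K] [Algebra K ℂ] (n ℓ : ℕ) (hℓ : ℓ.Prime)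
    (hn : Module.finrank ℚ K = n)
    (I : (FractionalIdeal (𝓞 K)⁰ K)ˣ) (u : Kˣ) (x : ℂ)
    (hu : toPrincipalIdeal (𝓞 K) K u = I ^ ℓ) (hx : x ^ ℓ = algebraMap K ℂ u)
    (hα : ∀ b : K, b ^ ℓ ≠ u) :
    Module.finrank K K⟮x⟯ = ℓ ∧
    Module.finrank ℚ (K⟮x⟯.restrictScalars ℚ) = n * ℓ ∧
    ∃ j ≤ n * ℓ, absDiscC (K⟮x⟯.restrictScalars ℚ) = ℓ ^ j * (NumberField.discr K).natAbs ^ ℓ := by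
  have hirr := X_pow_sub_C_irreducible_of_prime hℓ hα
  have hmin : X ^ ℓ - C (u : K) = minpoly K x := by
    apply minpoly.eq_of_irreducible_of_monic hirr
    · simp [hx]
    · exact monic_X_pow_sub_C _ hℓ.ne_zero
  have hint : IsIntegral K x := by
    refine ⟨X ^ ℓ - C (u : K), monic_X_pow_sub_C _ hℓ.ne_zero, ?_⟩
    simp [hx]
  have hfd : FiniteDimensional K K⟮x⟯ := adjoin.finiteDimensional hint
  have h1 : Module.finrank K K⟮x⟯ = ℓ := by
    rw [adjoin.finrank hint, ← hmin, natDegree_X_pow_sub_C]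
  have hfdQ : FiniteDimensional ℚ K⟮x⟯ := Module.Finite.trans K _
  have hnf : NumberField K⟮x⟯ := ⟨⟩
  have h2 : Module.finrank ℚ K⟮x⟯ = n * ℓ := by
    rw [← Module.finrank_mul_finrank ℚ K K⟮x⟯, h1, hn]
  refine ⟨h1, h2, ?_⟩
  have hI : (I : FractionalIdeal (𝓞 K)⁰ K) ^ ℓ = FractionalIdeal.spanSingleton _ (u : K) := by
    rw [← Units.val_pow_eq_pow_val, ← hu, coe_toPrincipalIdeal]
  have h3 := l_mem_different (L := K⟮x⟯) ℓ hℓ I u (AdjoinSimple.gen K x) hI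
    (by ext; simpa using hx) hα (by
      have := (adjoin.powerBasis hint).adjoin_gen_eq_top
      rwa [adjoin.powerBasis_gen] at this)
  obtain ⟨j, hj, hj'⟩ := discr_form ℓ (n * ℓ) hℓ h3 h1 h2
  refine ⟨j, hj, ?_⟩
  rw [← hj', absDiscC, dif_pos (show FiniteDimensional ℚ (K⟮x⟯.restrictScalars ℚ) from hfdQ)]
  rfl

theorem fibre_card {K : Type} [Field K] [NumberField K] [Algebra K ℂ] (ℓ : ℕ) (hℓ : ℓ.Prime)
    {T : Type} (I : T → (FractionalIdeal (𝓞 K)⁰ K)ˣ) (u : T → Kˣ) (x : T → ℂ) 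
    (c : T → ClassGroup (𝓞 K)) (hinj : Function.Injective c)
    (hc : ∀ t, ClassGroup.equiv K (c t) = QuotientGroup.mk (I t))
    (hu : ∀ t, toPrincipalIdeal (𝓞 K) K (u t) = I t ^ ℓ)
    (hx : ∀ t, x t ^ ℓ = algebraMap K ℂ (u t)) (M : IntermediateField K ℂ)
    (hM : Module.finrank K M = ℓ) (hmem : ∀ t, x t ∈ M) : Nat.card T ≤ ℓ ^ ℓ := by
  have hfd : FiniteDimensional K M := FiniteDimensional.of_finrank_pos (hM ▸ hℓ.pos)
  have : NeZero ℓ := ⟨hℓ.ne_zero⟩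
  have hx0 : ∀ t, x t ≠ 0 := by
    intro t h
    have := hx t
    rw [h, zero_pow hℓ.ne_zero] at this
    exact (u t).ne_zero ((map_eq_zero _).1 this.symm)
  have hpow : ∀ t (σ : M →ₐ[K] ℂ), (σ ⟨x t, hmem t⟩ / x t) ^ ℓ = 1 := by
    intro t σ
    rw [div_pow, ← map_pow, hx t]
    have : (⟨x t, hmem t⟩ : M) ^ ℓ = algebraMap K M (u t) := by
      ext; simpa using hx t
    rw [this, AlgHom.commutes, div_self]
    simp
  let f : T → ((M →ₐ[K] ℂ) → rootsOfUnity ℓ ℂ) := fun t σ => rootsOfUnity.mkOfPowEq _ (hpow t σ)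
  have hf : Function.Injective f := by
    intro s t hst
    have h1 : ∀ σ : M →ₐ[K] ℂ, σ (⟨x s, hmem s⟩ / ⟨x t, hmem t⟩) = x s / x t := by
      intro σ
      have := congrArg (fun z : rootsOfUnity ℓ ℂ => ((z : ℂˣ) : ℂ)) (congrFun hst σ)
      simp only [f, rootsOfUnity.coe_mkOfPowEq] at this
      have h0 : σ ⟨x t, hmem t⟩ ≠ 0 := by
        rw [Ne, map_eq_zero]
        intro h; exact hx0 t (congrArg Subtype.val h)
      rw [map_div₀]
      have := hx0 s
      have := hx0 t
      field_simp at *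
      linear_combination ‹σ _ * _ = _›
    obtain ⟨k, hk⟩ := mem_base_of_fixed _ _ h1
    have hk' : algebraMap K ℂ k = x s / x t := congrArg Subtype.val hk
    have hk0 : k ≠ 0 := by
      rintro rfl
      rw [map_zero] at hk'
      exact div_ne_zero (hx0 s) (hx0 t) hk'.symm
    apply hinj
    refine selmer_inj ℓ hℓ.pos _ _ _ _ _ _ (Units.mk0 k hk0) (hc s) (hc t) (hu s) (hu t) ?_
    ext
    apply (algebraMap K ℂ).injective
    simp only [Units.val_mul, Units.val_pow_eq_pow_val, Units.val_mk0, map_mul, map_pow, hk', ← hx]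
    rw [div_pow, mul_div_cancel₀ _ (pow_ne_zero _ (hx0 t))]
  have := Nat.card_le_card_of_injective f hf
  rw [Nat.card_fun, Complex.card_rootsOfUnity,
    Nat.card_eq_fintype_card (α := M →ₐ[K] ℂ), AlgHom.card, hM] at this
  exact this

theorem finite_disc (d D : ℕ) (hd : 0 < d) : 
    {M : IntermediateField ℚ ℂ | Module.finrank ℚ M = d ∧ absDiscC M = D}.Finite := by
  have := (NumberField.finite_of_discr_bdd ℂ D).image Subtype.val
  refine this.subset ?_
  rintro M ⟨h1, h2⟩
  have hfd : FiniteDimensional ℚ M := FiniteDimensional.of_finrank_pos (h1 ▸ hd)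
  refine ⟨⟨M, hfd⟩, ?_, rfl⟩
  rw [absDiscC, dif_pos hfd] at h2
  rw [Set.mem_ofPred_eq, Int.abs_eq_natAbs, ← h2]

open IntermediateField in
theorem clTor_bound {K : Type} [Field K] [NumberField K] (n ℓ : ℕ) (hn0 : 0 < n) (hℓ : ℓ.Prime)
    (hn : Module.finrank ℚ K = n) :
    clTor K ℓ ≤ 1 + ℓ ^ ℓ * ∑ j ∈ Finset.range (n * ℓ + 1),
      Nat.card {M : IntermediateField ℚ ℂ //
          Module.finrank ℚ M = n * ℓ ∧ absDiscC M = ℓ ^ j * (NumberField.discr K).natAbs ^ ℓ} := by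
  obtain ⟨φ⟩ : Nonempty (K →+* ℂ) := inferInstance
  let _ : Algebra K ℂ := φ.toAlgebra
  have hex : ∀ c : {c : ClassGroup (𝓞 K) // c ^ ℓ = 1}, ∃ (I : (FractionalIdeal (𝓞 K)⁰ K)ˣ) (u : Kˣ)
      (x : ℂ), ClassGroup.equiv K c.1 = QuotientGroup.mk I ∧ toPrincipalIdeal (𝓞 K) K u = I ^ ℓ ∧
        x ^ ℓ = algebraMap K ℂ u := by
    intro c
    obtain ⟨I, u, h1, h2⟩ := selmer_exists ℓ c.1 c.2
    obtain ⟨x, hx⟩ := IsAlgClosed.exists_pow_nat_eq (algebraMap K ℂ u) hℓ.pos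
    exact ⟨I, u, x, h1, h2, hx⟩
  choose I u x hc hu hx using hex
  let T := {c : ClassGroup (𝓞 K) // c ^ ℓ = 1}
  let e : T := ⟨1, one_pow ℓ⟩
  have hnon : ∀ c : T, c ≠ e → ∀ b : K, b ^ ℓ ≠ u c := by
    intro c hc1 b hb
    apply hc1
    have hb0 : b ≠ 0 := by
      rintro rfl
      rw [zero_pow hℓ.ne_zero] at hb
      exact (u c).ne_zero hb.symm
    apply Subtype.ext
    refine selmer_inj ℓ hℓ.pos _ 1 _ 1 _ 1 (Units.mk0 b hb0) (hc c) (by simp) (hu c) (by simp) ?_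
    ext; simp [hb]
  let M : T → IntermediateField ℚ ℂ := fun c => K⟮x c⟯.restrictScalars ℚ
  let s : Finset T := Finset.univ.erase e
  have hprops := fun c hc1 => field_props n ℓ hℓ hn (I c) (u c) (x c) (hu c) (hx c) (hnon c hc1)
  have hfib : ∀ a ∈ s.image M, (s.filter (fun c => M c = a)).card ≤ ℓ ^ ℓ := by
    intro a ha
    obtain ⟨c, hcs, rfl⟩ := Finset.mem_image.1 ha
    have := fibre_card ℓ hℓ (T := {t // t ∈ s.filter (fun c' => M c' = M c)})
      (fun t => I t.1) (fun t => u t.1) (fun t => x t.1) (fun t => t.1.1)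
      (fun a b h => Subtype.ext (Subtype.ext h)) (fun t => hc t.1) (fun t => hu t.1) (fun t => hx t.1) K⟮x c⟯
      (hprops c (Finset.ne_of_mem_erase hcs)).1 (by
        rintro ⟨t, ht⟩
        have h2 : M t = M c := (Finset.mem_filter.1 ht).2
        have h3 : x t ∈ M t := mem_adjoin_simple_self K (x t)
        rw [h2] at h3
        exact h3)
    rwa [Nat.card_eq_fintype_card, Fintype.card_coe] at this
  have h1 := Finset.card_le_mul_card_image s _ hfib
  let F : ℕ → Set (IntermediateField ℚ ℂ) := fun j =>
    {M | Module.finrank ℚ M = n * ℓ ∧ absDiscC M = ℓ ^ j * (NumberField.discr K).natAbs ^ ℓ}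
  have hF : ∀ j, (F j).Finite := fun j => finite_disc _ _ (Nat.mul_pos hn0 hℓ.pos)
  have h2 : s.image M ⊆ (Finset.range (n * ℓ + 1)).biUnion (fun j => (hF j).toFinset) := by
    intro a ha
    obtain ⟨c, hcs, rfl⟩ := Finset.mem_image.1 ha
    obtain ⟨-, h3, j, hj, h4⟩ := hprops c (Finset.ne_of_mem_erase hcs)
    rw [Finset.mem_biUnion]
    refine ⟨j, Finset.mem_range.2 (by omega), ?_⟩
    rw [Set.Finite.mem_toFinset]
    exact ⟨h3, h4⟩
  have h3 := (Finset.card_le_card h2).trans Finset.card_biUnion_le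
  have h4 : ∀ j, (hF j).toFinset.card = Nat.card {M : IntermediateField ℚ ℂ //
          Module.finrank ℚ M = n * ℓ ∧ absDiscC M = ℓ ^ j * (NumberField.discr K).natAbs ^ ℓ} := by
    intro j
    rw [← Set.ncard_eq_toFinset_card _ (hF j)]
    rfl
  simp only [h4] at h3
  have h5 : clTor K ℓ = 1 + s.card := by
    change Nat.card T = _
    rw [Nat.card_eq_fintype_card, Finset.card_erase_of_mem (Finset.mem_univ _), Finset.card_univ]
    have : 0 < Fintype.card T := Fintype.card_pos_iff.2 ⟨e⟩
    omega
  rw [h5]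
  gcongr
  exact h1.trans (Nat.mul_le_mul_left _ h3)

theorem discriminant_multiplicity_implies_torsion_bound (n : ℕ) (hn : 2 ≤ n)
    (ℓ : ℕ) (hℓ : ℓ.Prime) (Δ : ℝ) (hΔ : 0 ≤ Δ)
    (hDMC : ∀ ε : ℝ, 0 < ε → ∃ C : ℝ, ∀ D : ℕ, 1 < D →
      (Nat.card {M : IntermediateField ℚ ℂ //
          Module.finrank ℚ M = n * ℓ ∧ absDiscC M = D} : ℝ) ≤ C * (D : ℝ) ^ (Δ + ε)) :
    ∀ ε : ℝ, 0 < ε → ∃ C' : ℝ, ∀ (K : Type) [Field K] [NumberField K],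
      Module.finrank ℚ K = n →
      (clTor K ℓ : ℝ) ≤
        C' * ((NumberField.discr K).natAbs : ℝ) ^ ((ℓ : ℝ) * Δ + ε) := by
  intro ε hε
  have hℓ0 : (0 : ℝ) < ℓ := by exact_mod_cast hℓ.pos
  have hℓ1 : (1 : ℝ) ≤ ℓ := by exact_mod_cast hℓ.one_le
  obtain ⟨C, hC⟩ := hDMC (ε / ℓ) (by positivity)
  set e : ℝ := Δ + ε / ℓ with he
  have he0 : 0 ≤ e := by positivity
  refine ⟨1 + (ℓ : ℝ) ^ ℓ * ((n * ℓ + 1 : ℕ) * (max C 0 * ((ℓ : ℝ) ^ (n * ℓ)) ^ e)), ?_⟩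
  intro K _ _ hK
  have hb := clTor_bound (K := K) n ℓ (by omega) hℓ hK
  set D := (NumberField.discr K).natAbs with hD
  have hD2 : 2 < D := by
    have := abs_discr_gt_two (K := K) (by omega)
    rw [Int.abs_eq_natAbs] at this
    exact_mod_cast this
  have hDr : (1 : ℝ) ≤ D := by exact_mod_cast (by omega : 1 ≤ D)
  have hpow : ((D : ℝ) ^ ℓ) ^ e = (D : ℝ) ^ ((ℓ : ℝ) * Δ + ε) := by
    rw [← Real.rpow_natCast, ← Real.rpow_mul (by positivity), he]
    congr 1
    field_simp
  have hP1 : 1 ≤ (D : ℝ) ^ ((ℓ : ℝ) * Δ + ε) := Real.one_le_rpow hDr (by positivity)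
  have hj : ∀ j ∈ Finset.range (n * ℓ + 1), (Nat.card {M : IntermediateField ℚ ℂ //
          Module.finrank ℚ M = n * ℓ ∧ absDiscC M = ℓ ^ j * D ^ ℓ} : ℝ) ≤
      max C 0 * ((ℓ : ℝ) ^ (n * ℓ)) ^ e * (D : ℝ) ^ ((ℓ : ℝ) * Δ + ε) := by
    intro j hj
    have hjle : j ≤ n * ℓ := by have := Finset.mem_range.1 hj; omega
    have h1 : 1 < ℓ ^ j * D ^ ℓ := by
      have h2 : 1 < D ^ ℓ := Nat.one_lt_pow hℓ.ne_zero (by omega)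
      have h3 : 0 < ℓ ^ j := pow_pos hℓ.pos j
      nlinarith
    refine (hC _ h1).trans ?_
    push_cast
    rw [mul_assoc, ← hpow, ← Real.mul_rpow (by positivity) (by positivity)]
    have h4 : (ℓ : ℝ) ^ j ≤ (ℓ : ℝ) ^ (n * ℓ) := pow_le_pow_right₀ hℓ1 hjle
    have h5 : ((ℓ : ℝ) ^ j * (D : ℝ) ^ ℓ) ^ e ≤ ((ℓ : ℝ) ^ (n * ℓ) * (D : ℝ) ^ ℓ) ^ e :=
      Real.rpow_le_rpow (by positivity) (by gcongr) he0
    exact mul_le_mul (le_max_left _ _) h5 (by positivity) (le_max_right _ _)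
  have hs := Finset.sum_le_sum hj
  rw [Finset.sum_const, Finset.card_range, nsmul_eq_mul] at hs
  have hb' : (clTor K ℓ : ℝ) ≤ 1 + (ℓ : ℝ) ^ ℓ * ∑ j ∈ Finset.range (n * ℓ + 1),
      (Nat.card {M : IntermediateField ℚ ℂ //
          Module.finrank ℚ M = n * ℓ ∧ absDiscC M = ℓ ^ j * D ^ ℓ} : ℝ) := by
    exact_mod_cast hb
  have h6 := mul_le_mul_of_nonneg_left hs (show (0 : ℝ) ≤ (ℓ : ℝ) ^ ℓ by positivity)
  calc (clTor K ℓ : ℝ) ≤ _ := hb'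
    _ ≤ (D : ℝ) ^ ((ℓ : ℝ) * Δ + ε) + _ := add_le_add hP1 h6
    _ = _ := by ring
end

section
/- Fix a degree n ≥ 2 and a prime ℓ, and let 𝓕 be a set of degree-n subfields of ℂ; write 𝓕(X) = {K ∈ 𝓕 : D_K ≤ X}. Suppose (i) there exist constants c, C₀ > 0 with |𝓕(X)| ≤ C₀ · X^c for all X ≥ 2, and (ii) there exists α ≥ 1 such that for arbitrarily large integers k (i.e., for every k₀ there is some k ≥ k₀) there is a constant C_k with Σ_{K ∈ 𝓕(X)} |Cl_K[ℓ]|^k ≤ C_k · |𝓕(X)|^α for all X ≥ 2. Then for every ε > 0 there exists a constant C' such that every K ∈ 𝓕 satisfies |Cl_K[ℓ]| ≤ C' · D_K^ε. -/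
open NumberField
open scoped Classical

theorem finite_family (𝓕 : Set (IntermediateField ℚ ℂ))
    (hfin : ∀ K ∈ 𝓕, FiniteDimensional ℚ K) (N : ℕ) :
    {K : IntermediateField ℚ ℂ | K ∈ 𝓕 ∧ (absDiscC K : ℝ) ≤ N}.Finite := by
  have h := NumberField.finite_of_discr_bdd ℂ N
  refine (h.image Subtype.val).subset ?_
  rintro K ⟨hK, hD⟩
  have hf := hfin K hK
  refine ⟨⟨K, hf⟩, ?_, rfl⟩
  have hD' : absDiscC K ≤ N := by exact_mod_cast hD
  rw [absDiscC, dif_pos hf] at hD'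
  have : NumberField K := ⟨⟩
  show |discr K| ≤ (N : ℤ)
  rw [Int.abs_eq_natAbs]
  exact_mod_cast hD'

/-- **Pierce–Turnage-Butterbaugh–Wood (method of moments).** Fix `n ≥ 2`, a prime `ℓ`, and
a family `𝓕` of degree-`n` subfields of `ℂ`; write `𝓕(X) = {K ∈ 𝓕 : D_K ≤ X}`. Suppose
(i) there are constants `c, C₀ > 0` with `|𝓕(X)| ≤ C₀·X^c` for all `X ≥ 2`, and
(ii) there is `α ≥ 1` such that for arbitrarily large integers `k` there is a constant
`C_k` with `Σ_{K ∈ 𝓕(X)} |Cl_K[ℓ]|^k ≤ C_k·|𝓕(X)|^α` for all `X ≥ 2`. Then for every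
`ε > 0` there is a constant `C'` with `|Cl_K[ℓ]| ≤ C'·D_K^ε` for every `K ∈ 𝓕`. -/
theorem moments_imply_pointwise_torsion_bound (n : ℕ) (hn : 2 ≤ n) (ℓ : ℕ)
    (hℓ : ℓ.Prime) (𝓕 : Set (IntermediateField ℚ ℂ))
    (hdeg : ∀ K ∈ 𝓕, Module.finrank ℚ K = n)
    (hcount : ∃ c : ℝ, 0 < c ∧ ∃ C₀ : ℝ, 0 < C₀ ∧ ∀ X : ℝ, 2 ≤ X →
      (Nat.card {K : IntermediateField ℚ ℂ | K ∈ 𝓕 ∧ (absDiscC K : ℝ) ≤ X} : ℝ)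
        ≤ C₀ * X ^ c)
    (hmoments : ∃ α : ℝ, 1 ≤ α ∧ ∀ k₀ : ℕ, ∃ k : ℕ, k₀ ≤ k ∧ ∃ Ck : ℝ,
      ∀ X : ℝ, 2 ≤ X →
        (∑ᶠ K ∈ {K : IntermediateField ℚ ℂ | K ∈ 𝓕 ∧ (absDiscC K : ℝ) ≤ X},
            (clTor K ℓ : ℝ) ^ k)
          ≤ Ck * (Nat.card
              {K : IntermediateField ℚ ℂ | K ∈ 𝓕 ∧ (absDiscC K : ℝ) ≤ X} : ℝ) ^ α) :
    ∀ ε : ℝ, 0 < ε → ∃ C' : ℝ, ∀ K ∈ 𝓕,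
      (clTor K ℓ : ℝ) ≤ C' * (absDiscC K : ℝ) ^ ε := by
  intro ε hε
  obtain ⟨c, hc, C₀, hC₀, hcount⟩ := hcount
  obtain ⟨α, hα, hmom⟩ := hmoments
  obtain ⟨k, hk, Ck, hmom⟩ := hmom (⌈c * α / ε⌉₊ + 1)
  have hk0 : k ≠ 0 := by omega
  have hkε : c * α ≤ ε * k := by
    have h1 : c * α / ε ≤ k :=
      (Nat.le_ceil _).trans (by exact_mod_cast (by omega : ⌈c * α / ε⌉₊ ≤ k))
    rw [div_le_iff₀ hε] at h1
    linarith
  have hfin : ∀ K ∈ 𝓕, FiniteDimensional ℚ K := fun K hK =>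
    Module.finite_of_finrank_pos (by rw [hdeg K hK]; omega)
  have hA : 0 ≤ |Ck| * C₀ ^ α := by positivity
  refine ⟨|Ck| * C₀ ^ α + 1, fun K hK => ?_⟩
  have hf := hfin K hK
  have hD2 : (2 : ℝ) ≤ absDiscC K := by
    have : NumberField K := ⟨⟩
    have h := NumberField.abs_discr_gt_two (K := K) (by rw [hdeg K hK]; omega)
    have h' : 2 ≤ absDiscC K := by
      rw [absDiscC, dif_pos hf]
      rw [Int.abs_eq_natAbs] at h
      exact_mod_cast h.le
    exact_mod_cast h'
  have hS := finite_family 𝓕 hfin (absDiscC K)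
  have hm := hmom _ hD2
  have hcn := hcount _ hD2
  set D : ℝ := (absDiscC K : ℝ) with hD
  have hD0 : 0 < D := by linarith
  have hle : (clTor K ℓ : ℝ) ^ k ≤ |Ck| * C₀ ^ α * D ^ (c * α) := by
    have h1 : (clTor K ℓ : ℝ) ^ k ≤ Ck * (Nat.card
        {K : IntermediateField ℚ ℂ | K ∈ 𝓕 ∧ (absDiscC K : ℝ) ≤ D} : ℝ) ^ α := by
      rw [finsum_mem_eq_finite_toFinset_sum _ hS] at hm
      refine (Finset.single_le_sum
        (f := fun K : IntermediateField ℚ ℂ => (clTor K ℓ : ℝ) ^ k)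
        (fun i _ => by positivity) ?_).trans hm
      rw [Set.Finite.mem_toFinset]
      exact ⟨hK, le_rfl⟩
    refine h1.trans ?_
    calc _ ≤ |Ck| * (C₀ * D ^ c) ^ α := by
          refine mul_le_mul (le_abs_self _) ?_ (by positivity) (abs_nonneg _)
          exact Real.rpow_le_rpow (by positivity) hcn (by linarith)
      _ = _ := by
          rw [Real.mul_rpow hC₀.le (by positivity), ← Real.rpow_mul hD0.le, mul_assoc]
  refine le_of_pow_le_pow_left₀ hk0 (by positivity) (hle.trans ?_)
  rw [mul_pow, ← Real.rpow_mul_natCast hD0.le]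
  refine mul_le_mul ?_ (Real.rpow_le_rpow_of_exponent_le (by linarith) hkε)
    (by positivity) (by positivity)
  exact (by linarith : |Ck| * C₀ ^ α ≤ |Ck| * C₀ ^ α + 1).trans
    (le_self_pow₀ (by linarith) hk0)
end
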